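/- arXiv:2502.08394 — 2 statements merged into one kernel-verified Lean document; each statement's English description precedes it below -/
import Mathlib

section
/- RSW estimate for critical Bernoulli percolation on ℤ²: there exists a constant c > 0 such that for all integers n ≥ 1, ℙ_{1/2}[the rectangle [−n,n] × [0,n] contains an open crossing between its left and right sides] ≥ c, where such a crossing is a path of open edges whose vertices all lie in [−n,n] × [0,n], joining a vertex with first coordinate −n to a vertex with first coordinate n. -/
open MeasureTheory

namespace Perc

/-- Vertices of `ℤ^d`. -/
abbrev Vertex (d : ℕ) := Fin d → ℤ

/-- Nearest-neighbour adjacency in `ℤ^d`: `‖x − y‖₁ = 1`. -/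
def adj {d : ℕ} (x y : Vertex d) : Prop :=
  (∑ i, (x i - y i).natAbs) = 1

/-- The unordered pair `e` is a nearest-neighbour edge of `ℤ^d`. -/
def IsEdge {d : ℕ} (e : Sym2 (Vertex d)) : Prop :=
  ∃ x y : Vertex d, adj x y ∧ e = s(x, y)

/-- The set `E` of nearest-neighbour edges of `ℤ^d`. -/
abbrev Edge (d : ℕ) := {e : Sym2 (Vertex d) // IsEdge e}

/-- Percolation configurations `ω ∈ {0,1}^E`. -/
abbrev Config (d : ℕ) := Edge d → Bool

/-- One step along an open edge of `ω`. -/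
def step {d : ℕ} (ω : Config d) (x y : Vertex d) : Prop :=
  ∃ h : adj x y, ω ⟨s(x, y), x, y, h, rfl⟩ = true

/-- `x` and `y` are joined by a path of open edges. -/
def Conn {d : ℕ} (ω : Config d) : Vertex d → Vertex d → Prop :=
  Relation.ReflTransGen (step ω)

/-- The open cluster of `x` in `ω`. -/
def cluster {d : ℕ} (ω : Config d) (x : Vertex d) : Set (Vertex d) :=
  {y | Conn ω x y}

/-- The box `Λ_n = {−n, …, n}^d`. -/
def box (d n : ℕ) : Set (Vertex d) := {x | ∀ i, |x i| ≤ (n : ℤ)}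

/-- `∂Λ_n`: vertices of `Λ_n` having a nearest neighbour outside `Λ_n`. -/
def boxBoundary (d n : ℕ) : Set (Vertex d) :=
  {x | x ∈ box d n ∧ ∃ y, adj x y ∧ y ∉ box d n}

/-- The origin of `ℤ^d`. -/
def origin (d : ℕ) : Vertex d := fun _ => 0

/-- The event `{0 ↔ ∂Λ_n}`. -/
def ZeroToBoundary (d n : ℕ) : Set (Config d) :=
  {ω | ∃ y ∈ boxBoundary d n, Conn ω (origin d) y}

/-- The event `{0 ↔ ∞}` that the open cluster of the origin is infinite. -/
def ZeroToInfinity (d : ℕ) : Set (Config d) :=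
  {ω | (cluster ω (origin d)).Infinite}

/-- `μ` is the law of i.i.d. Bernoulli(p) edge variables: it is a probability measure on
`{0,1}^E` under which every finite cylinder has the corresponding product probability. -/
def IsBernoulli (d : ℕ) (p : ℝ) (μ : Measure (Config d)) : Prop :=
  IsProbabilityMeasure μ ∧
    ∀ (s : Finset (Edge d)) (f : Edge d → Bool),
      μ {ω : Config d | ∀ e ∈ s, ω e = f e} =
        ENNReal.ofReal (∏ e ∈ s, if f e then p else 1 - p)

/-- `x` and `y` are joined by a path of open edges all of whose vertices lie in `A`. -/
def ConnWithin (ω : Config 2) (A : Set (Vertex 2)) (x y : Vertex 2) : Prop :=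
  x ∈ A ∧ Relation.ReflTransGen (fun a b => step ω a b ∧ a ∈ A ∧ b ∈ A) x y

/-- The rectangle `[−n,n] × [0,n]` of `ℤ²`. -/
def rect (n : ℕ) : Set (Vertex 2) :=
  {x | -(n : ℤ) ≤ x 0 ∧ x 0 ≤ (n : ℤ) ∧ 0 ≤ x 1 ∧ x 1 ≤ (n : ℤ)}

/-- The event that `[−n,n] × [0,n]` contains an open left-right crossing: a path of open
edges with all vertices in the rectangle, joining a vertex with first coordinate `−n` to a
vertex with first coordinate `n`. -/
def HorizontalCrossing (n : ℕ) : Set (Config 2) :=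
  {ω | ∃ x y : Vertex 2, x 0 = -(n : ℤ) ∧ y 0 = (n : ℤ) ∧ ConnWithin ω (rect n) x y}

/-!
Scale `ℤ²` by two, so that its vertices, the midpoints of its edges and its faces are the points of
`ℤ × ℤ`; open and dual open paths then are grid paths through open and closed points.

*Squares.* A square is crossed from left to right by an open path or from bottom to top by a closed
dual path, and these two events have almost the same probability at `p = 1/2`. Hence an open path
crosses a square with probability at least `1/2`.

*Hooks.* Explore all closed paths coming from below a square `Q`. If `Q` is crossed, the
exploration stops at an open crossing `s` of `Q` and reveals nothing above it. Let `Q'` be the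
square of twice the size that contains `Q` in its lower left corner, so that `s` and its mirror
image together cross `Q'`. With probability at least `1/2` an open path descends from the top of
`Q'` to this union, and by symmetry it arrives at `s` with probability at least `1/4`. So with
probability at least `1/8` the left end of a crossing of `Q` is joined to the top of `Q'`.

*Gluing.* By the Harris inequality, such a hook, a hook upside down and a vertical crossing of `Q`
occur together with probability bounded below, and they form a crossing in the long direction of a
rectangle of aspect ratio `3/2`. Overlapping crossings of such rectangles, joined by crossings of
squares, cross longer rectangles.
-/

/-! ### Local events in product spaces -/

section LocalEvents

variable {ι : Type*} {X : ι → Type*}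

/-- `E` is a local event: whether it occurs is determined by finitely many coordinates. -/
def IsLocal (E : Set (∀ i, X i)) : Prop :=
  ∃ F : Finset ι, DependsOn (· ∈ E) (F : Set ι)

theorem dependsOn_mem_inter {E E' : Set (∀ i, X i)} {F : Set ι} (hE : DependsOn (· ∈ E) F)
    (hE' : DependsOn (· ∈ E') F) : DependsOn (· ∈ E ∩ E') F :=
  fun _ _ h ↦ congrArg₂ And (hE h) (hE' h)

theorem isLocal_of_finite {E : Set (∀ i, X i)} {F : Set ι} (hF : F.Finite)
    (hE : DependsOn (· ∈ E) F) : IsLocal E :=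
  ⟨hF.toFinset, by simpa using hE⟩

theorem IsLocal.inter {E E' : Set (∀ i, X i)} (hE : IsLocal E) (hE' : IsLocal E') :
    IsLocal (E ∩ E') := by
  classical
  obtain ⟨F, hF⟩ := hE
  obtain ⟨F', hF'⟩ := hE'
  exact ⟨F ∪ F', dependsOn_mem_inter (hF.mono (by simp)) (hF'.mono (by simp))⟩

theorem IsLocal.preimage_comp {κ α : Type*} {E : Set (κ → α)} (hE : IsLocal E) (f : κ → ι) :
    IsLocal ((· ∘ f : (ι → α) → κ → α) ⁻¹' E) := by
  classical
  obtain ⟨F, hF⟩ := hE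
  exact ⟨F.image f, fun ω ω' h ↦ hF fun k hk ↦ h (f k) (by simpa using ⟨k, hk, rfl⟩)⟩

theorem preimage_restrict_image_restrict {E : Set (∀ i, X i)} {F : Finset ι}
    (hE : DependsOn (· ∈ E) (F : Set ι)) : F.restrict ⁻¹' (F.restrict '' E) = E := by
  refine Set.Subset.antisymm (fun ω ⟨ω', hω', h⟩ ↦ ?_) (Set.subset_preimage_image _ _)
  exact (hE fun i hi ↦ congrFun h ⟨i, hi⟩).mp hω'

theorem isUpperSet_image_restrict [∀ i, Preorder (X i)] {E : Set (∀ i, X i)}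
    (hE : IsUpperSet E) (F : Finset ι) : IsUpperSet (F.restrict '' E) := by
  classical
  rintro _ y hxy ⟨ω, hω, rfl⟩
  refine ⟨fun i ↦ if h : i ∈ F then y ⟨i, h⟩ else ω i, hE (fun i ↦ ?_) hω, ?_⟩
  · by_cases hi : i ∈ F
    · simpa [hi] using hxy ⟨i, hi⟩
    · simp [hi]
  · ext i
    simp

variable [∀ i, MeasurableSpace (X i)] [∀ i, Finite (X i)] [∀ i, DiscreteMeasurableSpace (X i)]

theorem IsLocal.measurableSet {E : Set (∀ i, X i)} (hE : IsLocal E) : MeasurableSet E := by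
  obtain ⟨F, hF⟩ := hE
  rw [← preimage_restrict_image_restrict hF]
  exact F.measurable_restrict (Set.toFinite _).measurableSet

variable (μ : ∀ i, Measure (X i)) [∀ i, IsProbabilityMeasure (μ i)]

theorem infinitePi_real_of_dependsOn {E : Set (∀ i, X i)} {F : Finset ι}
    (hE : DependsOn (· ∈ E) (F : Set ι)) :
    (Measure.infinitePi μ).real E = (Measure.pi fun i : F ↦ μ i).real (F.restrict '' E) := by
  rw [← Measure.infinitePi_map_restrict μ, map_measureReal_apply F.measurable_restrict
    (Set.toFinite _).measurableSet, preimage_restrict_image_restrict hE]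

theorem infinitePi_real_inter_of_disjoint {E E' : Set (∀ i, X i)} {F F' : Finset ι}
    (hE : DependsOn (· ∈ E) (F : Set ι)) (hE' : DependsOn (· ∈ E') (F' : Set ι))
    (hFF' : Disjoint F F') :
    (Measure.infinitePi μ).real (E ∩ E') =
      (Measure.infinitePi μ).real E * (Measure.infinitePi μ).real E' := by
  have hindep := (ProbabilityTheory.iIndepFun_infinitePi (P := μ) (X := fun _ x ↦ x)
    fun _ ↦ measurable_id).indepFun_finset F F' hFF' fun _ ↦ by fun_prop
  have hinter := hindep.measure_inter_preimage_eq_mul (F.restrict '' E) (F'.restrict '' E')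
    (Set.toFinite _).measurableSet (Set.toFinite _).measurableSet
  change Measure.infinitePi μ (F.restrict ⁻¹' _ ∩ F'.restrict ⁻¹' _) =
    Measure.infinitePi μ (F.restrict ⁻¹' _) * Measure.infinitePi μ (F'.restrict ⁻¹' _) at hinter
  rw [preimage_restrict_image_restrict hE, preimage_restrict_image_restrict hE'] at hinter
  simp only [measureReal_def, hinter, ENNReal.toReal_mul]

theorem infinitePi_real_pos {E : Set (∀ i, X i)} (hE : IsLocal E) {ω : ∀ i, X i} (hω : ω ∈ E)
    (hμ : ∀ i, μ i {ω i} ≠ 0) : 0 < (Measure.infinitePi μ).real E := by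
  obtain ⟨F, hF⟩ := hE
  have hsub : (F : Set ι).pi (fun i ↦ {ω i}) ⊆ E :=
    fun ω' hω' ↦ (hF fun i hi ↦ (hω' i hi).symm).mp hω
  refine ENNReal.toReal_pos (ne_of_gt (lt_of_lt_of_le ?_ (measure_mono hsub))) (measure_ne_top _ _)
  rw [Measure.infinitePi_pi μ fun i _ ↦ measurableSet_singleton _]
  exact pos_iff_ne_zero.mpr (Finset.prod_ne_zero_iff.mpr fun i _ ↦ hμ i)

end LocalEvents

section Reindexing

variable {ι κ : Type*} {X : ι → Type*} [∀ i, MeasurableSpace (X i)] (μ : ∀ i, Measure (X i))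
  [∀ i, IsProbabilityMeasure (μ i)]

theorem map_infinitePi_comp_of_injective {f : κ → ι} (hf : f.Injective) :
    (Measure.infinitePi μ).map (fun ω k ↦ ω (f k)) = Measure.infinitePi fun k ↦ μ (f k) := by
  let e := Equiv.ofInjective f hf
  let g := MeasurableEquiv.piCongrLeft (fun i : Set.range f ↦ X i) e
  have hcongr : (Measure.infinitePi fun k ↦ μ (e k)).map g =
      Measure.infinitePi fun i : Set.range f ↦ μ i :=
    Measure.infinitePi_map_piCongrLeft (fun i : Set.range f ↦ μ i) e
  change (Measure.infinitePi μ).map (g.symm ∘ (Set.range f).domRestrict) =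
    Measure.infinitePi fun k ↦ μ (e k)
  rw [← Measure.map_map g.symm.measurable (by fun_prop), Measure.infinitePi_map_restrict',
    ← hcongr, g.map_symm_map]

end Reindexing

/-! ### The Harris inequality -/

section Harris

variable {ι : Type*} {X : ι → Type*} [∀ i, MeasurableSpace (X i)] [∀ i, Finite (X i)]
  [∀ i, DiscreteMeasurableSpace (X i)] (μ : ∀ i, Measure (X i))
  [∀ i, IsProbabilityMeasure (μ i)]

theorem pi_real_eq_sum [Fintype ι] [Fintype (∀ i, X i)] (S : Set (∀ i, X i)) :
    (Measure.pi μ).real S = ∑ x, (∏ i, (μ i).real {x i}) * S.indicator 1 x := by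
  classical
  have hsum := sum_measureReal_singleton (μ := Measure.pi μ) S.toFinset
  rw [Set.coe_toFinset] at hsum
  simp only [← hsum, Set.indicator_apply, Pi.one_apply, mul_ite, mul_one, mul_zero,
    ← Finset.sum_filter, measureReal_def, Measure.pi_singleton, ENNReal.toReal_prod]
  exact Finset.sum_congr (by ext; simp) fun _ _ ↦ rfl

variable [∀ i, LinearOrder (X i)]

theorem pi_real_mul_le_inter [Fintype ι] {S T : Set (∀ i, X i)} (hS : IsUpperSet S)
    (hT : IsUpperSet T) :
    (Measure.pi μ).real S * (Measure.pi μ).real T ≤ (Measure.pi μ).real (S ∩ T) := by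
  have := Fintype.ofFinite (∀ i, X i)
  have hnonneg (A : Set (∀ i, X i)) : 0 ≤ A.indicator (1 : (∀ i, X i) → ℝ) :=
    Set.indicator_nonneg fun _ _ ↦ zero_le_one
  have hmono {A : Set (∀ i, X i)} (hA : IsUpperSet A) :
      Monotone (A.indicator (1 : (∀ i, X i) → ℝ)) :=
    fun x y hxy ↦ by
      by_cases hx : x ∈ A
      · simp [hx, hA hxy hx]
      · exact (Set.indicator_of_notMem hx _).trans_le (hnonneg A y)
  have hmod (x y : ∀ i, X i) : (∏ i, (μ i).real {x i}) * ∏ i, (μ i).real {y i} ≤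
      (∏ i, (μ i).real {(x ⊓ y) i}) * ∏ i, (μ i).real {(x ⊔ y) i} := by
    rw [← Finset.prod_mul_distrib, ← Finset.prod_mul_distrib]
    refine (Finset.prod_congr rfl fun i _ ↦ ?_).le
    rcases le_total (x i) (y i) with h | h <;> simp [h, mul_comm]
  have htotal : ∑ x : ∀ i, X i, ∏ i, (μ i).real {x i} = 1 := by
    simpa using (pi_real_eq_sum μ Set.univ).symm
  have hfkg := fkg _ _ (fun x : ∀ i, X i ↦ ∏ i, (μ i).real {x i})
    (fun x ↦ Finset.prod_nonneg fun i _ ↦ measureReal_nonneg) (hnonneg S) (hnonneg T)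
    (hmono hS) (hmono hT) hmod
  rw [htotal, one_mul] at hfkg
  simpa only [pi_real_eq_sum, Set.inter_indicator_one, Pi.mul_apply] using hfkg

theorem infinitePi_real_mul_le_inter {E E' : Set (∀ i, X i)} (hE : IsUpperSet E)
    (hE' : IsUpperSet E') (hEl : IsLocal E) (hEl' : IsLocal E') :
    (Measure.infinitePi μ).real E * (Measure.infinitePi μ).real E' ≤
      (Measure.infinitePi μ).real (E ∩ E') := by
  classical
  obtain ⟨F, hF⟩ := hEl
  obtain ⟨F', hF'⟩ := hEl'
  replace hF := hF.mono (t := ((F ∪ F' : Finset ι) : Set ι)) (by simp)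
  replace hF' := hF'.mono (t := ((F ∪ F' : Finset ι) : Set ι)) (by simp)
  have himage : (F ∪ F').restrict '' (E ∩ E') =
      (F ∪ F').restrict '' E ∩ (F ∪ F').restrict '' E' := by
    rw [← Set.image_inter_preimage, preimage_restrict_image_restrict hF']
  rw [infinitePi_real_of_dependsOn μ hF, infinitePi_real_of_dependsOn μ hF',
    infinitePi_real_of_dependsOn μ (dependsOn_mem_inter hF hF'), himage]
  exact pi_real_mul_le_inter _ (isUpperSet_image_restrict hE _) (isUpperSet_image_restrict hE' _)

end Harris

/-! ### Exploration -/

section Exploration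

variable {ι β : Type*} {X : ι → Type*} [∀ i, MeasurableSpace (X i)] [∀ i, Finite (X i)]
  [∀ i, DiscreteMeasurableSpace (X i)] (μ : ∀ i, Measure (X i))
  [∀ i, IsProbabilityMeasure (μ i)]

-- Condition on the value of `D`: the coordinates revealing it say nothing about `Y`.
theorem infinitePi_real_mul_le_of_exploration {L E : Set (∀ i, X i)} {D : (∀ i, X i) → β} {c : ℝ}
    (hc : 0 ≤ c) (hE : IsLocal E) (hfin : (D '' L).Finite)
    (hreveal : ∀ ω₀ ∈ L, ∃ F F' : Finset ι, ∃ Y : Set (∀ i, X i), Disjoint F F' ∧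
      DependsOn (D · = D ω₀) (F : Set ι) ∧ DependsOn (· ∈ Y) (F' : Set ι) ∧
      c ≤ (Measure.infinitePi μ).real Y ∧ {ω | D ω = D ω₀} ∩ Y ⊆ E) :
    (Measure.infinitePi μ).real L * c ≤ (Measure.infinitePi μ).real E := by
  set P := Measure.infinitePi μ
  have hmem {d : β} (hd : d ∈ hfin.toFinset) : ∃ ω₀ ∈ L, D ω₀ = d := by simpa using hd
  calc P.real L * c ≤ (∑ d ∈ hfin.toFinset, P.real {ω | D ω = d}) * c := by
        gcongr
        refine (measureReal_mono (fun ω hω ↦ ?_) (measure_ne_top _ _)).trans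
          (measureReal_biUnion_finset_le _ _)
        exact Set.mem_biUnion (hfin.mem_toFinset.mpr ⟨ω, hω, rfl⟩) rfl
    _ = ∑ d ∈ hfin.toFinset, P.real {ω | D ω = d} * c := Finset.sum_mul ..
    _ ≤ ∑ d ∈ hfin.toFinset, P.real ({ω | D ω = d} ∩ E) := by
        refine Finset.sum_le_sum fun d hd ↦ ?_
        obtain ⟨ω₀, hω₀, rfl⟩ := hmem hd
        obtain ⟨F, F', Y, hFF', hF, hF', hY, hsub⟩ := hreveal ω₀ hω₀
        calc P.real {ω | D ω = D ω₀} * c ≤ P.real {ω | D ω = D ω₀} * P.real Y := by gcongr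
          _ = P.real ({ω | D ω = D ω₀} ∩ Y) :=
            (infinitePi_real_inter_of_disjoint μ hF hF' hFF').symm
          _ ≤ P.real ({ω | D ω = D ω₀} ∩ E) :=
            measureReal_mono (Set.subset_inter Set.inter_subset_left hsub)
    _ = P.real (⋃ d ∈ hfin.toFinset, {ω | D ω = d} ∩ E) := by
        refine (measureReal_biUnion_finset (fun d _ d' _ hdd' ↦ ?_) fun d hd ↦ ?_).symm
        · exact Set.disjoint_left.mpr fun ω h h' ↦ hdd' (h.1.symm.trans h'.1)
        · obtain ⟨ω₀, hω₀, rfl⟩ := hmem hd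
          obtain ⟨F, F', Y, -, hF, -⟩ := hreveal ω₀ hω₀
          exact (IsLocal.measurableSet ⟨F, hF⟩).inter hE.measurableSet
    _ ≤ P.real E := measureReal_mono (Set.iUnion₂_subset fun _ _ ↦ Set.inter_subset_right)

end Exploration

/-! ### Fair coins -/

section FairCoins

open ProbabilityTheory

variable {ι κ : Type*}

/-- The law of a family of independent fair coins indexed by `ι`. -/
noncomputable def fairCoins (ι : Type*) : Measure (ι → Bool) :=
  Measure.infinitePi fun _ ↦ uniformOn Set.univ

instance : IsProbabilityMeasure (uniformOn (Set.univ : Set Bool)) :=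
  isProbabilityMeasure_uniformOn Set.finite_univ Set.univ_nonempty

instance : IsProbabilityMeasure (fairCoins ι) :=
  inferInstanceAs (IsProbabilityMeasure (Measure.infinitePi _))

theorem uniformOn_bool_singleton (b : Bool) : uniformOn (Set.univ : Set Bool) {b} = 2⁻¹ := by
  rw [uniformOn_univ, Measure.count_singleton, Fintype.card_bool, one_div, Nat.cast_ofNat]

theorem eq_fairCoins {ν : Measure (ι → Bool)}
    (hν : ∀ (s : Finset ι) (f : ι → Bool), ν {ω | ∀ i ∈ s, ω i = f i} = 2⁻¹ ^ s.card) :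
    ν = fairCoins ι := by
  refine ((Measure.isProjectiveLimit_infinitePi _).unique fun s ↦
    Measure.ext_of_singleton fun x ↦ ?_).symm
  have hcyl : Finset.restrict (π := fun _ ↦ Bool) s ⁻¹' {x} =
      {ω : ι → Bool | ∀ i ∈ s, ω i = Function.extend Subtype.val x (fun _ ↦ false) i} := by
    ext ω
    simp only [Set.mem_preimage, Set.mem_singleton_iff, funext_iff, Set.mem_ofPred_eq]
    exact ⟨fun h i hi ↦ (h ⟨i, hi⟩).trans (Subtype.val_injective.extend_apply x _ ⟨i, hi⟩).symm,
      fun h i ↦ (h i i.2).trans (Subtype.val_injective.extend_apply x _ i)⟩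
  rw [Measure.map_apply (by fun_prop) (measurableSet_singleton x), hcyl, hν, Measure.pi_singleton]
  simp only [uniformOn_bool_singleton, Finset.prod_const, Finset.card_univ, Fintype.card_coe]

theorem fairCoins_real_pos {E : Set (ι → Bool)} (hE : IsLocal E) (hne : E.Nonempty) :
    0 < (fairCoins ι).real E :=
  infinitePi_real_pos _ hE hne.some_mem fun i ↦ by rw [uniformOn_bool_singleton]; simp

theorem measurePreserving_comp_of_injective {f : κ → ι} (hf : f.Injective) :
    MeasurePreserving (· ∘ f : (ι → Bool) → κ → Bool) (fairCoins ι) (fairCoins κ) :=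
  ⟨by fun_prop, map_infinitePi_comp_of_injective _ hf⟩

theorem measurePreserving_not :
    MeasurePreserving (fun ω i ↦ !ω i) (fairCoins ι) (fairCoins ι) := by
  refine ⟨by fun_prop, ?_⟩
  rw [fairCoins, Measure.infinitePi_map_pi _ fun _ ↦ by fun_prop]
  congr! 2
  refine Measure.ext_of_singleton fun b ↦ ?_
  rw [Measure.map_apply (by fun_prop) (measurableSet_singleton b), uniformOn_bool_singleton]
  rw [show Bool.not ⁻¹' {b} = {!b} by ext; simp [Bool.not_eq_eq_eq_not], uniformOn_bool_singleton]

end FairCoins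

/-! ### Paths inside a set of vertices -/

section Linked

variable {V : Type*} {G : SimpleGraph V} {s t : Set V} {p q r : V}

/-- `p` and `q` are joined by a path of the graph `G` all of whose vertices lie in `s`. -/
def Linked (G : SimpleGraph V) (s : Set V) (p q : V) : Prop :=
  p ∈ s ∧ Relation.ReflTransGen (fun a b ↦ G.Adj a b ∧ b ∈ s) p q

namespace Linked

theorem refl (hp : p ∈ s) : Linked G s p p := ⟨hp, .refl⟩

theorem tail (h : Linked G s p q) (hqr : G.Adj q r) (hr : r ∈ s) : Linked G s p r :=
  ⟨h.1, h.2.tail ⟨hqr, hr⟩⟩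

@[elab_as_elim]
theorem induction {motive : ∀ q, Linked G s p q → Prop} (h : Linked G s p q)
    (refl : ∀ hp : p ∈ s, motive p (refl hp))
    (tail : ∀ {a b} (ha : Linked G s p a) (hab : G.Adj a b) (hb : b ∈ s),
      motive a ha → motive b (ha.tail hab hb)) : motive q h := by
  obtain ⟨hp, hpq⟩ := h
  induction hpq with
  | refl => exact refl hp
  | tail h hab ih => exact tail ⟨hp, h⟩ hab.1 hab.2 ih

theorem mem_right (h : Linked G s p q) : q ∈ s := by
  induction h using Linked.induction with
  | refl hp => exact hp
  | tail _ _ hb _ => exact hb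

theorem trans (h : Linked G s p q) (h' : Linked G s q r) : Linked G s p r :=
  ⟨h.1, h.2.trans h'.2⟩

theorem symm (h : Linked G s p q) : Linked G s q p := by
  induction h using Linked.induction with
  | refl hp => exact refl hp
  | tail ha hab hb ih => exact ((refl hb).tail hab.symm ha.mem_right).trans ih

theorem map {W : Type*} {H : SimpleGraph W} {u : Set W} (f : G →g H) (hf : Set.MapsTo f s u)
    (h : Linked G s p q) : Linked H u (f p) (f q) :=
  ⟨hf h.1, h.2.lift f fun _ _ hab ↦ ⟨f.map_adj hab.1, hf hab.2⟩⟩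

theorem mono (hst : s ⊆ t) (h : Linked G s p q) : Linked G t p q :=
  h.map .id hst

theorem component (h : Linked G s p q) : Linked G {r | Linked G s p r} p q := by
  induction h using Linked.induction with
  | refl hp => exact refl (refl hp)
  | tail ha hab hb ih => exact ih.tail hab (ha.tail hab hb)

theorem diff_or_exists_adj {A : Set V} (h : Linked G s p q) (hp : p ∉ A) :
    Linked G (s \ A) p q ∨ ∃ b, Linked G (s \ A) p b ∧ ∃ a ∈ s ∩ A, G.Adj b a := by
  induction h using Linked.induction with
  | refl hps => exact .inl (refl ⟨hps, hp⟩)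
  | @tail a b _ hab hb ih =>
    refine ih.elim (fun ha ↦ ?_) .inr
    by_cases hbA : b ∈ A
    · exact .inr ⟨a, ha, b, ⟨hb, hbA⟩, hab⟩
    · exact .inl (ha.tail hab ⟨hb, hbA⟩)

end Linked

end Linked

/-! ### The grid, and the intersection of crossing paths -/

/-- The nearest-neighbour graph on `ℤ × ℤ`. -/
def grid : SimpleGraph (ℤ × ℤ) where
  Adj a b := (a.1 - b.1).natAbs + (a.2 - b.2).natAbs = 1
  symm := ⟨fun a b h ↦ by omega⟩
  loopless := ⟨fun a h ↦ by omega⟩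

theorem grid_adj {a b : ℤ × ℤ} :
    grid.Adj a b ↔ (a.1 - b.1).natAbs + (a.2 - b.2).natAbs = 1 := Iff.rfl

section Crossing

variable {s t : Set (ℤ × ℤ)} {p q v w : ℤ × ℤ}

/-- `N v` counts, with sign, how often some path from `p` to `q` inside `s` crosses the vertical
half-line going down from `v`. The crossings are those from the column left of `v` to the column
of `v`, and a start of the path on the half-line counts as one, whence the correction terms at
the endpoints in `horizontal`. -/
structure IsCrossingNumber (s : Set (ℤ × ℤ)) (p q : ℤ × ℤ) (N : ℤ × ℤ → ℤ) : Prop where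
  vertical : ∀ x y, (x, y) ∉ s → N (x, y + 1) = N (x, y)
  horizontal : ∀ x y, (x, y) ∉ s → N (x, y) - N (x + 1, y) =
    (if q.1 = x ∧ q.2 < y then 1 else 0) - if p.1 = x + 1 ∧ p.2 < y then 1 else 0
  of_above : ∀ v ∉ s, (∀ r ∈ s, r.2 ≤ v.2) →
    N v = (if p.1 ≤ v.1 then 1 else 0) - if q.1 < v.1 then 1 else 0
  of_below : ∀ v, (∀ r ∈ s, v.2 ≤ r.2) → N v = 0

theorem IsCrossingNumber.refl (hp : p ∈ s) :
    IsCrossingNumber s p p fun v ↦ if p.1 = v.1 ∧ p.2 < v.2 then 1 else 0 where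
  vertical x y h := by
    have : p ≠ (x, y) := by rintro rfl; exact h hp
    grind
  horizontal x y _ := by grind
  of_above v hv h := by
    have := h p hp
    have : p ≠ v := by rintro rfl; exact hv hp
    grind
  of_below v h := by
    have := h p hp
    grind

theorem IsCrossingNumber.tail {N : ℤ × ℤ → ℤ} (hN : IsCrossingNumber s p q N) (hq : q ∈ s)
    (hadj : grid.Adj q w) (hw : w ∈ s) :
    IsCrossingNumber s p w fun v ↦ N v +
      if q.2 < v.2 then (if q.1 < v.1 then 1 else 0) - if w.1 < v.1 then 1 else 0 else 0 := by
  have hne {v} (hv : v ∉ s) : q ≠ v ∧ w ≠ v :=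
    ⟨by rintro rfl; exact hv hq, by rintro rfl; exact hv hw⟩
  rw [grid_adj] at hadj
  refine ⟨fun x y h ↦ ?_, fun x y h ↦ ?_, fun v hv h ↦ ?_, fun v h ↦ ?_⟩
  · have := hN.vertical x y h
    have := hne h
    grind
  · have := hN.horizontal x y h
    have := hne h
    grind
  · have := hN.of_above v hv h
    have := hne hv
    have := h q hq
    have := h w hw
    grind
  · have := hN.of_below v h
    have := h q hq
    grind

theorem Linked.exists_isCrossingNumber (h : Linked grid s p q) :
    ∃ N, IsCrossingNumber s p q N := by
  induction h using Linked.induction with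
  | refl hp => exact ⟨_, .refl hp⟩
  | tail ha hab hb ih =>
    obtain ⟨N, hN⟩ := ih
    exact ⟨_, hN.tail ha.mem_right hab hb⟩

theorem IsCrossingNumber.eq_of_linked {N : ℤ × ℤ → ℤ} (hN : IsCrossingNumber s p q N)
    (ht : Linked grid t v w) (hcol : ∀ r ∈ t, p.1 ≤ r.1 ∧ r.1 ≤ q.1) (hst : Disjoint s t) :
    N w = N v := by
  induction ht using Linked.induction with
  | refl _ => rfl
  | @tail a b ha hab hb ih =>
    rw [← ih]
    have has : a ∉ s := hst.notMem_of_mem_right ha.mem_right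
    have hbs : b ∉ s := hst.notMem_of_mem_right hb
    have hacol := hcol a ha.mem_right
    have hbcol := hcol b hb
    obtain ⟨x, y⟩ := a
    obtain ⟨x', y'⟩ := b
    obtain ⟨rfl, rfl⟩ | ⟨rfl, rfl⟩ | ⟨rfl, rfl⟩ | ⟨rfl, rfl⟩ :
        x' = x ∧ y' = y + 1 ∨ x' = x ∧ y = y' + 1 ∨ x' = x + 1 ∧ y' = y ∨ x = x' + 1 ∧ y' = y := by
      rw [grid_adj] at hab
      omega
    · exact hN.vertical _ _ has
    · exact (hN.vertical _ _ hbs).symm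
    · have := hN.horizontal _ _ has
      grind
    · have := hN.horizontal _ _ hbs
      grind

theorem nonempty_inter_of_linked (hs : Linked grid s p q) (ht : Linked grid t v w)
    (hcol : ∀ r ∈ t, p.1 ≤ r.1 ∧ r.1 ≤ q.1) (hrow : ∀ r ∈ s, v.2 ≤ r.2 ∧ r.2 ≤ w.2) :
    (s ∩ t).Nonempty := by
  by_contra! hst
  rw [← Set.disjoint_iff_inter_eq_empty] at hst
  obtain ⟨N, hN⟩ := hs.exists_isCrossingNumber
  have hbot := hN.of_below v fun r hr ↦ (hrow r hr).1
  have htop := hN.of_above w (hst.notMem_of_mem_right ht.mem_right) fun r hr ↦ (hrow r hr).2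
  have := hN.eq_of_linked ht hcol hst
  have := hcol w ht.mem_right
  grind

theorem exists_linked_of_crossing (hs : Linked grid s p q) (ht : Linked grid t v w)
    (hcol : ∀ r ∈ t, p.1 ≤ r.1 ∧ r.1 ≤ q.1) (hrow : ∀ r ∈ s, v.2 ≤ r.2 ∧ r.2 ≤ w.2) :
    ∃ r, Linked grid s p r ∧ Linked grid t v r :=
  nonempty_inter_of_linked hs.component ht.component (fun _ hr ↦ hcol _ (Linked.mem_right hr))
    fun _ hr ↦ hrow _ (Linked.mem_right hr)

end Crossing

section Reach

variable {V : Type*} {G : SimpleGraph V} {s t B : Set V} {a b : V}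

/-- The set of vertices joined to `B` by a path of `G` inside `s`. -/
def reach (G : SimpleGraph V) (s B : Set V) : Set V :=
  {q | ∃ p ∈ B, Linked G s p q}

theorem reach_subset : reach G s B ⊆ s := fun _ ⟨_, _, h⟩ ↦ h.mem_right

theorem mem_reach_of_mem (hB : a ∈ B) (hs : a ∈ s) : a ∈ reach G s B := ⟨a, hB, .refl hs⟩

theorem reach_subset_of_forall_adj {C : Set V} (hB : ∀ a ∈ B, a ∈ s → a ∈ C)
    (hC : ∀ a ∈ C, ∀ b ∈ s, G.Adj a b → b ∈ C) : reach G s B ⊆ C := by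
  rintro q ⟨p, hp, h⟩
  induction h using Linked.induction with
  | refl hs => exact hB p hp hs
  | tail _ hab hb ih => exact hC _ ih _ hb hab

theorem mem_reach_of_adj (ha : a ∈ reach G s B) (hab : G.Adj a b) (hb : b ∈ s) :
    b ∈ reach G s B := by
  obtain ⟨p, hp, h⟩ := ha
  exact ⟨p, hp, h.tail hab hb⟩

theorem exists_linked_reach (ha : a ∈ reach G s B) : ∃ p ∈ B, Linked G (reach G s B) p a := by
  obtain ⟨p, hp, h⟩ := ha
  exact ⟨p, hp, h.component.mono fun _ hr ↦ ⟨p, hp, hr⟩⟩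

theorem mem_reach_iff_of_linked (h : Linked G s a b) : a ∈ reach G s B ↔ b ∈ reach G s B :=
  ⟨fun ⟨p, hp, hpa⟩ ↦ ⟨p, hp, hpa.trans h⟩, fun ⟨p, hp, hpb⟩ ↦ ⟨p, hp, hpb.trans h.symm⟩⟩

theorem reach_congr (hB : ∀ a ∈ B, (a ∈ s ↔ a ∈ t))
    (h : ∀ a ∈ reach G s B, ∀ b, G.Adj a b → (b ∈ s ↔ b ∈ t)) : reach G t B = reach G s B := by
  apply Set.Subset.antisymm
  · exact reach_subset_of_forall_adj (fun a ha hat ↦ mem_reach_of_mem ha ((hB a ha).mpr hat))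
      fun a ha b hb hab ↦ mem_reach_of_adj ha hab ((h a ha b hab).mpr hb)
  · refine (reach_subset_of_forall_adj (C := reach G s B ∩ reach G t B) (fun a ha has ↦ ?_)
      fun a ha b hb hab ↦ ?_).trans Set.inter_subset_right
    · exact ⟨mem_reach_of_mem ha has, mem_reach_of_mem ha ((hB a ha).mp has)⟩
    · exact ⟨mem_reach_of_adj ha.1 hab hb, mem_reach_of_adj ha.2 hab ((h a ha.1 b hab).mp hb)⟩

end Reach

/-- The set of lattice points of the rectangle `[x₀, x₁] × [y₀, y₁]`. -/
def rectangle (x₀ x₁ y₀ y₁ : ℤ) : Set (ℤ × ℤ) := Set.Icc x₀ x₁ ×ˢ Set.Icc y₀ y₁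

theorem mem_rectangle {x₀ x₁ y₀ y₁ : ℤ} {p : ℤ × ℤ} :
    p ∈ rectangle x₀ x₁ y₀ y₁ ↔ (x₀ ≤ p.1 ∧ p.1 ≤ x₁) ∧ y₀ ≤ p.2 ∧ p.2 ≤ y₁ := Iff.rfl

theorem rectangle_finite (x₀ x₁ y₀ y₁ : ℤ) : (rectangle x₀ x₁ y₀ y₁).Finite :=
  (Set.finite_Icc _ _).prod (Set.finite_Icc _ _)

/-! ### A crossing or a dual crossing exists -/

theorem sum_range_mul_sub_eq {R : Type*} [CommRing R] {f u : ℕ → R} (n : ℕ) (hu : u 0 = 0)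
    (h : ∀ x < n, u (x + 1) * (f (x + 1) - f x) = 0) :
    ∑ x ∈ Finset.range (n + 1), f x * (u (x + 1) - u x) = f n * u (n + 1) := by
  induction n with
  | zero => simp [hu]
  | succ n ih =>
    rw [Finset.sum_range_succ, ih fun x hx ↦ h x (by omega)]
    linear_combination -h n (by omega)

-- Both products express that an edge and its dual edge are not simultaneously open. The sum of
-- `σ x y * (χ (x + 1) y - χ x y)` over a row does not depend on `y`, while the boundary values
-- give `-1` at the bottom and `0` at the top.
theorem false_of_mul_sub_eq_zero {R : Type*} [CommRing R] [Nontrivial R] {χ σ : ℕ → ℕ → R}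
    {a b : ℕ}
    (hleft : ∀ y ≤ b, χ 0 y = 1) (hright : ∀ y ≤ b, χ (a + 1) y = 0)
    (hbot : ∀ x ≤ a, σ x 0 = 1) (htop : ∀ x ≤ a, σ x (b + 1) = 0)
    (hhor : ∀ x ≤ a, ∀ y ≤ b, (χ (x + 1) y - χ x y) * (σ x (y + 1) - σ x y) = 0)
    (hver : ∀ x < a, ∀ y < b,
      (χ (x + 1) (y + 1) - χ (x + 1) y) * (σ (x + 1) (y + 1) - σ x (y + 1)) = 0) : False := by
  have hcross {y} (hy : y ≤ b) : ∑ x ∈ Finset.range (a + 1), σ x (y + 1) * (χ (x + 1) y - χ x y) =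
      ∑ x ∈ Finset.range (a + 1), σ x y * (χ (x + 1) y - χ x y) :=
    Finset.sum_congr rfl fun x hx ↦ by
      linear_combination hhor x (Finset.mem_range_succ_iff.mp hx) y hy
  have hup {y} (hy : y < b) :
      ∑ x ∈ Finset.range (a + 1), σ x (y + 1) * (χ (x + 1) (y + 1) - χ x (y + 1)) =
        ∑ x ∈ Finset.range (a + 1), σ x (y + 1) * (χ (x + 1) y - χ x y) := by
    have := sum_range_mul_sub_eq (f := fun x ↦ σ x (y + 1)) (u := fun x ↦ χ x (y + 1) - χ x y) a
      (by simp [hleft y hy.le, hleft (y + 1) hy]) fun x hx ↦ hver x hx y hy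
    rw [← sub_eq_zero, ← Finset.sum_sub_distrib]
    simp only [hright y hy.le, hright (y + 1) hy, sub_self, mul_zero] at this
    exact Eq.trans (Finset.sum_congr rfl fun x _ ↦ by ring) this
  have hrow {y} (hy : y ≤ b) :
      ∑ x ∈ Finset.range (a + 1), σ x y * (χ (x + 1) y - χ x y) = -1 := by
    induction y with
    | zero =>
      calc ∑ x ∈ Finset.range (a + 1), σ x 0 * (χ (x + 1) 0 - χ x 0)
          = ∑ x ∈ Finset.range (a + 1), (χ (x + 1) 0 - χ x 0) :=
            Finset.sum_congr rfl fun x hx ↦ by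
              rw [hbot x (Finset.mem_range_succ_iff.mp hx), one_mul]
        _ = -1 := by
            rw [Finset.sum_range_sub fun x ↦ χ x 0, hleft 0 hy, hright 0 hy, zero_sub]
    | succ y ih => rw [hup hy, hcross (by omega), ih (by omega)]
  have hlast := hcross le_rfl
  rw [hrow le_rfl, Finset.sum_eq_zero fun x hx ↦ by
    rw [htop x (Finset.mem_range_succ_iff.mp hx), zero_mul]] at hlast
  exact one_ne_zero (neg_eq_zero.mp hlast.symm)

theorem indicator_reach_eq_of_adj_adj {V : Type*} {G : SimpleGraph V} {s B : Set V} {a m b : V}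
    (ha : a ∈ s) (hm : m ∈ s) (hb : b ∈ s) (ham : G.Adj a m) (hmb : G.Adj m b) :
    (reach G s B).indicator (1 : V → ℤ) b = (reach G s B).indicator 1 a := by
  have h := mem_reach_iff_of_linked (B := B) (((Linked.refl ha).tail ham hm).tail hmb hb)
  by_cases ha : a ∈ reach G s B
  · rw [Set.indicator_of_mem ha, Set.indicator_of_mem (h.mp ha), Pi.one_apply, Pi.one_apply]
  · rw [Set.indicator_of_notMem ha, Set.indicator_of_notMem (h.not.mp ha)]

theorem indicator_reach_sub_mul_sub_eq_zero {V : Type*} {G : SimpleGraph V} {O S T B C : Set V}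
    {a b c d : V} (m : V) (hmS : m ∈ S) (hmT : m ∈ T) (ha : a ∈ O ∩ S) (hb : b ∈ O ∩ S)
    (hc : c ∈ Oᶜ ∩ T) (hd : d ∈ Oᶜ ∩ T)
    (ham : G.Adj a m) (hmb : G.Adj m b) (hcm : G.Adj c m) (hmd : G.Adj m d) :
    ((reach G (O ∩ S) B).indicator (1 : V → ℤ) b - (reach G (O ∩ S) B).indicator 1 a) *
      ((reach G (Oᶜ ∩ T) C).indicator 1 d - (reach G (Oᶜ ∩ T) C).indicator 1 c) = 0 := by
  rw [mul_eq_zero, sub_eq_zero, sub_eq_zero]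
  by_cases hm : m ∈ O
  · exact .inl (indicator_reach_eq_of_adj_adj ha ⟨hm, hmS⟩ hb ham hmb)
  · exact .inr (indicator_reach_eq_of_adj_adj hc ⟨hm, hmT⟩ hd hcm hmd)

theorem exists_crossing_or_dual_crossing {O : Set (ℤ × ℤ)} (a b : ℕ)
    (heven : ∀ x y : ℤ, (2 * x, 2 * y) ∈ O) (hodd : ∀ x y : ℤ, (2 * x + 1, 2 * y + 1) ∉ O) :
    (∃ p : ℤ × ℤ, p.1 = 0 ∧ ∃ q : ℤ × ℤ, q.1 = 2 * a ∧
      Linked grid (O ∩ rectangle 0 (2 * a) 0 (2 * b)) p q) ∨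
    ∃ p : ℤ × ℤ, (p.1 % 2 = 1 ∧ p.2 = -1) ∧ ∃ q : ℤ × ℤ, q.2 = 2 * b + 1 ∧
      Linked grid (Oᶜ ∩ rectangle 1 (2 * a - 1) (-1) (2 * b + 1)) p q := by
  by_contra! hcon
  obtain ⟨hO, hK⟩ := hcon
  set s := O ∩ rectangle 0 (2 * a) 0 (2 * b)
  set t := Oᶜ ∩ rectangle 1 (2 * a - 1) (-1) (2 * b + 1)
  have hs {x y : ℕ} (hx : x ≤ a) (hy : y ≤ b) : (2 * (x : ℤ), 2 * (y : ℤ)) ∈ s :=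
    ⟨heven _ _, by rw [mem_rectangle]; dsimp; omega⟩
  have ht {x y : ℕ} (hx : x < a) (hy : y ≤ b + 1) : (2 * (x : ℤ) + 1, 2 * (y : ℤ) - 1) ∈ t :=
    ⟨by convert hodd x (y - 1) using 3; ring, by rw [mem_rectangle]; dsimp; omega⟩
  obtain _ | a := a
  · exact hO _ rfl _ rfl (.refl (hs le_rfl b.zero_le))
  refine false_of_mul_sub_eq_zero (a := a) (b := b)
    (χ := fun x y ↦ (reach grid s {p | p.1 = 0}).indicator (1 : ℤ × ℤ → ℤ) (2 * x, 2 * y))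
    (σ := fun x y ↦ (reach grid t {p | p.1 % 2 = 1 ∧ p.2 = -1}).indicator (1 : ℤ × ℤ → ℤ)
      (2 * x + 1, 2 * y - 1))
    (fun y hy ↦ ?_) (fun y _ ↦ ?_) (fun x hx ↦ ?_) (fun x _ ↦ ?_)
    (fun x hx y hy ↦ ?_) fun x hx y hy ↦ ?_
  · exact Set.indicator_of_mem (mem_reach_of_mem (by simp) (hs (by omega) hy)) 1
  · exact Set.indicator_of_notMem (by rintro ⟨p, hp, h⟩; exact hO p hp _ rfl h) 1
  · exact Set.indicator_of_mem (mem_reach_of_mem (by simp) (ht (by omega) (by omega))) 1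
  · exact Set.indicator_of_notMem (by rintro ⟨p, hp, h⟩; exact hK p hp _ (by dsimp; omega) h) 1
  · refine indicator_reach_sub_mul_sub_eq_zero (2 * x + 1, 2 * y) ?_ ?_ (hs (by omega) hy)
      (hs (by omega) hy) (ht (by omega) (by omega)) (ht (by omega) (by omega)) ?_ ?_ ?_ ?_ <;>
      simp only [mem_rectangle, grid_adj] <;> omega
  · refine indicator_reach_sub_mul_sub_eq_zero (2 * x + 2, 2 * y + 1) ?_ ?_
      (hs (by omega) (by omega)) (hs (by omega) hy) (ht (by omega) (by omega))
      (ht (by omega) (by omega)) ?_ ?_ ?_ ?_ <;>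
      simp only [mem_rectangle, grid_adj] <;> omega

/-! ### Percolation on the doubled lattice -/

local notation "ℙ" => Measure.real (fairCoins (ℤ × ℤ))

section Events

variable {ω ω' : ℤ × ℤ → Bool} {S T A B A' B' : Set (ℤ × ℤ)} {f : ℤ × ℤ → ℤ × ℤ} {p q : ℤ × ℤ}

/-- The open points of `ℤ × ℤ`, seen as a scaling of the square lattice by two: the points with
two even coordinates stand for the vertices and are always open, the points with odd coordinate
sum are the midpoints of the edges and are open according to `ω`, and the points with two odd
coordinates stand for the faces and are never open. -/
def openSites (ω : ℤ × ℤ → Bool) : Set (ℤ × ℤ) :=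
  {p | p.1 % 2 = 0 ∧ p.2 % 2 = 0 ∨ (p.1 + p.2) % 2 = 1 ∧ ω p}

theorem mem_openSites : p ∈ openSites ω ↔
    p.1 % 2 = 0 ∧ p.2 % 2 = 0 ∨ (p.1 + p.2) % 2 = 1 ∧ ω p := Iff.rfl

theorem openSites_mono (h : ω ≤ ω') : openSites ω ⊆ openSites ω' :=
  fun p hp ↦ hp.imp_right fun hp ↦ ⟨hp.1, h p hp.2⟩

theorem mem_openSites_congr (h : ω p = ω' p) : p ∈ openSites ω ↔ p ∈ openSites ω' := by
  rw [mem_openSites, mem_openSites, h]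

theorem openSites_inter_congr (h : ∀ p ∈ S, ω p = ω' p) : openSites ω ∩ S = openSites ω' ∩ S :=
  Set.ext fun p ↦ and_congr_left fun hp ↦ mem_openSites_congr (h p hp)

/-- The event that an open path inside `S` joins `A` to `B`. -/
def connects (S A B : Set (ℤ × ℤ)) : Set (ℤ × ℤ → Bool) :=
  {ω | ∃ p ∈ A, ∃ q ∈ B, Linked grid (openSites ω ∩ S) p q}

theorem isUpperSet_connects : IsUpperSet (connects S A B) :=
  fun _ _ hle ⟨p, hp, q, hq, h⟩ ↦
    ⟨p, hp, q, hq, h.mono (Set.inter_subset_inter_left _ (openSites_mono hle))⟩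

theorem isLocal_connects (hS : S.Finite) : IsLocal (connects S A B) :=
  isLocal_of_finite hS fun ω ω' h ↦ by
    simp only [connects, Set.mem_ofPred_eq, openSites_inter_congr h]

/-- A map of the grid to itself that respects vertices, edges and faces of the square lattice. -/
structure IsSymmetry (f : ℤ × ℤ → ℤ × ℤ) : Prop where
  injective : f.Injective
  adj : ∀ p q, grid.Adj p q → grid.Adj (f p) (f q)
  vertex_iff : ∀ p, (f p).1 % 2 = 0 ∧ (f p).2 % 2 = 0 ↔ p.1 % 2 = 0 ∧ p.2 % 2 = 0
  edge_iff : ∀ p, ((f p).1 + (f p).2) % 2 = 1 ↔ (p.1 + p.2) % 2 = 1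

namespace IsSymmetry

theorem openSites_comp (hf : IsSymmetry f) : openSites (ω ∘ f) = f ⁻¹' openSites ω := by
  ext p
  rw [Set.mem_preimage, mem_openSites, mem_openSites, hf.vertex_iff, hf.edge_iff]
  rfl

theorem linked (hf : IsSymmetry f) (hST : Set.MapsTo f S T)
    (h : Linked grid (openSites (ω ∘ f) ∩ S) p q) :
    Linked grid (openSites ω ∩ T) (f p) (f q) := by
  rw [hf.openSites_comp] at h
  exact h.map ⟨f, hf.adj _ _⟩ fun r hr ↦ ⟨hr.1, hST hr.2⟩

theorem real_connects_le (hf : IsSymmetry f) (hS : S.Finite) (hST : Set.MapsTo f S T)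
    (hA : Set.MapsTo f A A') (hB : Set.MapsTo f B B') :
    ℙ (connects S A B) ≤ ℙ (connects T A' B') := by
  rw [← (measurePreserving_comp_of_injective hf.injective).measureReal_preimage
    (isLocal_connects hS).measurableSet.nullMeasurableSet]
  exact measureReal_mono fun ω ⟨p, hp, q, hq, h⟩ ↦ ⟨f p, hA hp, f q, hB hq, hf.linked hST h⟩

theorem translate (a b : ℤ) : IsSymmetry fun p ↦ (p.1 + 2 * a, p.2 + 2 * b) where
  injective p q h := by simpa [Prod.ext_iff] using h
  adj p q h := by simpa [grid_adj] using h
  vertex_iff p := by dsimp; omega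
  edge_iff p := by dsimp; omega

theorem swap : IsSymmetry Prod.swap where
  injective := Prod.swap_injective
  adj p q h := by simpa [grid_adj, add_comm] using h
  vertex_iff p := and_comm
  edge_iff p := by rw [add_comm, Prod.fst_swap, Prod.snd_swap]

theorem reflectFst (a : ℤ) : IsSymmetry fun p ↦ (2 * a - p.1, p.2) where
  injective p q h := by simpa [Prod.ext_iff] using h
  adj p q h := by rw [grid_adj] at *; dsimp; omega
  vertex_iff p := by dsimp; omega
  edge_iff p := by dsimp; omega

theorem reflectSnd (a : ℤ) : IsSymmetry fun p ↦ (p.1, 2 * a - p.2) where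
  injective p q h := by simpa [Prod.ext_iff] using h
  adj p q h := by rw [grid_adj] at *; dsimp; omega
  vertex_iff p := by dsimp; omega
  edge_iff p := by dsimp; omega

end IsSymmetry

/-- The event that `[x₀, x₁] × [y₀, y₁]` is crossed by an open path from left to right. -/
abbrev leftRight (x₀ x₁ y₀ y₁ : ℤ) : Set (ℤ × ℤ → Bool) :=
  connects (rectangle x₀ x₁ y₀ y₁) {p | p.1 = x₀} {p | p.1 = x₁}

/-- The event that `[x₀, x₁] × [y₀, y₁]` is crossed by an open path from bottom to top. -/
abbrev bottomTop (x₀ x₁ y₀ y₁ : ℤ) : Set (ℤ × ℤ → Bool) :=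
  connects (rectangle x₀ x₁ y₀ y₁) {p | p.2 = y₀} {p | p.2 = y₁}

theorem real_leftRight_le_of_translate {x₀ x₁ y₀ y₁ x₀' x₁' y₀' y₁' : ℤ} (a b : ℤ)
    (hx₀ : x₀' = x₀ + 2 * a) (hx₁ : x₁' = x₁ + 2 * a) (hy₀ : y₀' ≤ y₀ + 2 * b)
    (hy₁ : y₁ + 2 * b ≤ y₁') :
    ℙ (leftRight x₀ x₁ y₀ y₁) ≤ ℙ (leftRight x₀' x₁' y₀' y₁') := by
  refine (IsSymmetry.translate a b).real_connects_le (rectangle_finite ..) (fun p hp ↦ ?_)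
    (fun p hp ↦ ?_) fun p hp ↦ ?_
  · rw [mem_rectangle] at *
    dsimp
    omega
  · exact hx₀ ▸ congrArg (· + 2 * a) hp
  · exact hx₁ ▸ congrArg (· + 2 * a) hp

theorem real_leftRight_eq_real_bottomTop (x₀ x₁ y₀ y₁ : ℤ) :
    ℙ (leftRight x₀ x₁ y₀ y₁) = ℙ (bottomTop y₀ y₁ x₀ x₁) :=
  le_antisymm
    (IsSymmetry.swap.real_connects_le (rectangle_finite ..) (fun _ ↦ And.symm) (fun _ ↦ id)
      fun _ ↦ id)
    (IsSymmetry.swap.real_connects_le (rectangle_finite ..) (fun _ ↦ And.symm) (fun _ ↦ id)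
      fun _ ↦ id)

/-- The configuration dual to `ω`: midpoints of edges of the dual lattice, shifted by `(1, 1)` to
the lattice itself, are open where `ω` is closed. -/
def dual (ω : ℤ × ℤ → Bool) (p : ℤ × ℤ) : Bool := !ω (p.1 - 1, p.2 - 1)

theorem measurePreserving_dual :
    MeasurePreserving dual (fairCoins (ℤ × ℤ)) (fairCoins (ℤ × ℤ)) :=
  measurePreserving_not.comp <| measurePreserving_comp_of_injective
    (f := fun p : ℤ × ℤ ↦ (p.1 - 1, p.2 - 1)) fun p q h ↦ by simpa [Prod.ext_iff] using h

theorem mem_openSites_dual : (p.1 + 1, p.2 + 1) ∈ openSites (dual ω) ↔ p ∉ openSites ω := by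
  have h : dual ω (p.1 + 1, p.2 + 1) = !ω p := by simp [dual]
  rw [mem_openSites, mem_openSites, h]
  grind

theorem mem_leftRight_or_dual_mem_bottomTop (n : ℕ) (ω : ℤ × ℤ → Bool) :
    ω ∈ leftRight 0 (2 * (n + 1)) 0 (2 * (n + 1)) ∨
      dual ω ∈ bottomTop 0 (2 * (n + 1)) 0 (2 * (n + 1)) := by
  obtain ⟨p, hp, q, hq, h⟩ | ⟨p, hp, q, hq, h⟩ := exists_crossing_or_dual_crossing
      (O := openSites ω) (n + 1) n (fun x y ↦ by simp [mem_openSites])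
      fun x y ↦ by rw [mem_openSites]; omega
  · refine .inl ⟨p, hp, q, by simpa using hq, h.mono ?_⟩
    exact fun r hr ↦ ⟨hr.1, by have := hr.2; rw [mem_rectangle] at *; omega⟩
  · refine .inr ⟨(p.1 + 1, p.2 + 1), by simp [hp.2], (q.1 + 1, q.2 + 1), ?_, ?_⟩
    · rw [Set.mem_ofPred_eq, hq]
      ring
    · refine h.map ⟨fun r ↦ (r.1 + 1, r.2 + 1), fun h ↦ ?_⟩ fun r hr ↦ ?_
      · simpa [grid_adj] using h
      · exact ⟨mem_openSites_dual.mpr hr.1, by have := hr.2; rw [mem_rectangle] at *; dsimp; omega⟩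

theorem half_le_real_bottomTop_square (n : ℕ) (hn : 1 ≤ n) :
    1 / 2 ≤ ℙ (bottomTop 0 (2 * n) 0 (2 * n)) := by
  obtain ⟨n, rfl⟩ := Nat.exists_eq_add_of_le' hn
  push_cast
  set E := bottomTop 0 (2 * (n + 1)) 0 (2 * (n + 1))
  have hdual : ℙ (dual ⁻¹' E) = ℙ E := measurePreserving_dual.measureReal_preimage
    (isLocal_connects (rectangle_finite ..)).measurableSet.nullMeasurableSet
  have hcover : leftRight 0 (2 * (n + 1)) 0 (2 * (n + 1)) ∪ dual ⁻¹' E = Set.univ :=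
    Set.eq_univ_of_forall (mem_leftRight_or_dual_mem_bottomTop n)
  have := measureReal_union_le (μ := fairCoins (ℤ × ℤ))
    (leftRight 0 (2 * (n + 1)) 0 (2 * (n + 1))) (dual ⁻¹' E)
  rw [hcover, probReal_univ, hdual, real_leftRight_eq_real_bottomTop] at this
  linarith

end Events

/-! ### Exploration from below -/

section Explored

variable {n : ℕ} {ω ω' : ℤ × ℤ → Bool} {p : ℤ × ℤ}

/-- The part of the plane in which `[0, 2n] × [0, 2n]` is explored: it is crossed from bottom to
top by the dual paths that prevent a left-right crossing of the square. -/
abbrev dualSquare (n : ℕ) : Set (ℤ × ℤ) := rectangle 1 (2 * n - 1) (-1) (2 * n + 1)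

/-- The points which can be reached by closed paths from below `[0, 2n] × [0, 2n]`. -/
def explored (n : ℕ) (ω : ℤ × ℤ → Bool) : Set (ℤ × ℤ) :=
  reach grid ((openSites ω)ᶜ ∩ dualSquare n) {p | p.1 % 2 = 1 ∧ p.2 = -1}

/-- The points whose state is revealed by the exploration of `explored n ω`. -/
def revealed (n : ℕ) (ω : ℤ × ℤ → Bool) : Set (ℤ × ℤ) :=
  {p ∈ dualSquare n | ∃ a ∈ explored n ω, grid.Adj a p}

theorem explored_subset : explored n ω ⊆ (openSites ω)ᶜ ∩ dualSquare n := reach_subset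

theorem finite_range_explored : (Set.range (explored n)).Finite :=
  (rectangle_finite ..).finite_subsets.subset <| Set.range_subset_iff.mpr fun _ ↦
    explored_subset.trans Set.inter_subset_right

theorem mem_openSites_of_mem_revealed (hp : p ∈ revealed n ω \ explored n ω) :
    p ∈ openSites ω := by
  obtain ⟨⟨hps, a, ha, hap⟩, hpe⟩ := hp
  by_contra hpo
  exact hpe (mem_reach_of_adj ha hap ⟨hpo, hps⟩)

theorem explored_congr (h : ∀ p ∈ revealed n ω, ω p = ω' p) : explored n ω' = explored n ω := by
  refine reach_congr (fun a ⟨hx, hy⟩ ↦ ?_) fun a ha b hab ↦ ?_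
  · have hface (η : ℤ × ℤ → Bool) : a ∈ (openSites η)ᶜ := by
      rw [Set.mem_compl_iff, mem_openSites]
      omega
    exact and_congr_left' (iff_of_true (hface ω) (hface ω'))
  · exact and_congr_left fun hb ↦ not_congr (mem_openSites_congr (h b ⟨hb, a, ha, hab⟩))

theorem dependsOn_explored_eq (ω : ℤ × ℤ → Bool) :
    DependsOn (explored n · = explored n ω) (revealed n ω) := by
  have hmp {η η' : ℤ × ℤ → Bool} (h : ∀ p ∈ revealed n ω, η p = η' p)
      (hη : explored n η = explored n ω) : explored n η' = explored n ω := by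
    rw [← hη]
    exact explored_congr fun p hp ↦ h p (by rwa [revealed, ← hη])
  exact fun η η' h ↦ propext ⟨hmp h, hmp fun p hp ↦ (h p hp).symm⟩

theorem snd_ne_of_mem_explored (hω : ω ∈ leftRight 0 (2 * n) 0 (2 * n)) (hp : p ∈ explored n ω) :
    p.2 ≠ 2 * n + 1 := by
  intro htop
  obtain ⟨b, hb, hbp⟩ := hp
  obtain ⟨l, hl, r, hr, h⟩ := hω
  rw [Set.mem_ofPred_eq] at hb hl hr
  obtain ⟨c, hc⟩ := nonempty_inter_of_linked h hbp
    (fun c hc ↦ by have := hc.2; rw [mem_rectangle] at this; omega)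
    fun c hc ↦ by have := hc.2; rw [mem_rectangle] at this; omega
  exact hc.2.1 hc.1.1

/-- `s` is a connected set crossing `[0, 2n] × [0, 2n]` from `p` on the left to `q` on the right. -/
structure IsCrossing (n : ℕ) (s : Set (ℤ × ℤ)) (p q : ℤ × ℤ) : Prop where
  subset : s ⊆ rectangle 0 (2 * n) 0 (2 * n)
  fst_left : p.1 = 0
  fst_right : q.1 = 2 * n
  right_mem : q ∈ s
  linked : ∀ r ∈ s, Linked grid s p r

/-- The points which the exploration reveals to be open, and the vertices, open anyway. -/
def revealedOpen (n : ℕ) (ω : ℤ × ℤ → Bool) : Set (ℤ × ℤ) :=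
  {p | p.1 % 2 = 0 ∧ p.2 % 2 = 0} ∪ revealed n ω \ explored n ω

theorem revealedOpen_subset : revealedOpen n ω ⊆ openSites ω :=
  Set.union_subset (fun _ ↦ .inl) fun _ ↦ mem_openSites_of_mem_revealed

-- The exploration could only be stopped by a path of open points.
theorem exists_isCrossing_revealedOpen (hω : ω ∈ leftRight 0 (2 * n) 0 (2 * n)) :
    ∃ s ⊆ revealedOpen n ω, ∃ p q, IsCrossing n s p q := by
  obtain ⟨p, hp, q, hq, h⟩ | ⟨p, hp, q, hq, h⟩ := exists_crossing_or_dual_crossing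
    (O := revealedOpen n ω) n n (fun x y ↦ .inl (by simp)) fun x y h ↦ by
      have := revealedOpen_subset h
      rw [mem_openSites] at this
      omega
  · exact ⟨{r | Linked grid _ p r}, fun r hr ↦ (Linked.mem_right hr).1, p, q,
      fun r hr ↦ (Linked.mem_right hr).2, hp, hq, h, fun r hr ↦ Linked.component hr⟩
  · refine absurd hq (snd_ne_of_mem_explored hω (p := q) ?_)
    refine reach_subset_of_forall_adj (C := explored n ω)
      (fun a ha has ↦ mem_reach_of_mem ha ⟨?_, has.2⟩) (fun a ha b hb hab ↦ ?_) ⟨p, hp, h⟩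
    · rw [Set.mem_compl_iff, mem_openSites]
      rw [Set.mem_ofPred_eq] at ha
      omega
    · by_contra hbe
      exact hb.1 (.inr ⟨⟨hb.2, a, ha, hab⟩, hbe⟩)

end Explored

/-! ### Hooking a crossing to the top -/

section Hook

variable {n : ℕ} {ω : ℤ × ℤ → Bool} {s t : Set (ℤ × ℤ)} {p q v w : ℤ × ℤ}

/-- The reflection of the square `[0, 4n] × [0, 4n]` in its vertical axis. -/
def mirror (n : ℕ) (p : ℤ × ℤ) : ℤ × ℤ := (2 * (2 * n) - p.1, p.2)

theorem isSymmetry_mirror : IsSymmetry (mirror n) := .reflectFst _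

theorem mirror_mirror : mirror n (mirror n p) = p := by simp [mirror]

/-- The union of `s` and its mirror image. -/
def symmetrized (n : ℕ) (s : Set (ℤ × ℤ)) : Set (ℤ × ℤ) := s ∪ mirror n ⁻¹' s

theorem mirror_mem_symmetrized : mirror n p ∈ symmetrized n s ↔ p ∈ symmetrized n s := by
  simp only [symmetrized, Set.mem_union, Set.mem_preimage, mirror_mirror, or_comm]

theorem IsCrossing.linked_symmetrized (h : IsCrossing n s p q) :
    Linked grid (symmetrized n s) p (mirror n p) := by
  have hq : mirror n q = q := by
    refine Prod.ext ?_ rfl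
    rw [mirror, h.fst_right]
    ring
  have hmirror : Linked grid (symmetrized n s) (mirror n q) (mirror n p) :=
    (h.linked q h.right_mem).symm.map ⟨mirror n, isSymmetry_mirror.adj _ _⟩ fun r hr ↦
      .inr (by rwa [Set.mem_preimage, RelHom.coeFn_mk, mirror_mirror])
  rw [hq] at hmirror
  exact ((h.linked q h.right_mem).mono Set.subset_union_left).trans hmirror

theorem IsCrossing.symmetrized_subset (h : IsCrossing n s p q) :
    symmetrized n s ⊆ rectangle 0 (4 * n) 0 (2 * n) := by
  rintro r (hr | hr) <;> have := h.subset hr <;> simp only [mem_rectangle, mirror] at * <;> omega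

theorem IsCrossing.nonempty_symmetrized_inter (h : IsCrossing n s p q) (ht : Linked grid t v w)
    (hcol : ∀ r ∈ t, 0 ≤ r.1 ∧ r.1 ≤ 4 * n) (hv : v.2 ≤ 0) (hw : 2 * n ≤ w.2) :
    (symmetrized n s ∩ t).Nonempty := by
  refine nonempty_inter_of_linked h.linked_symmetrized ht (fun r hr ↦ ?_) fun r hr ↦ ?_
  · have := h.fst_left
    have := hcol r hr
    dsimp [mirror]
    omega
  · have := h.symmetrized_subset hr
    rw [mem_rectangle] at this
    omega

/-- The region above the symmetrization of `s` in `[0, 4n] × [0, 4n]`. -/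
def above (n : ℕ) (s : Set (ℤ × ℤ)) : Set (ℤ × ℤ) :=
  reach grid (rectangle 0 (4 * n) 0 (4 * n) \ symmetrized n s) {p | p.2 = 4 * n}

theorem above_subset : above n s ⊆ rectangle 0 (4 * n) 0 (4 * n) :=
  reach_subset.trans Set.sdiff_subset

theorem mapsTo_mirror_above : Set.MapsTo (mirror n) (above n s) (above n s) := by
  rintro q ⟨p, hp, h⟩
  refine ⟨mirror n p, hp, h.map ⟨mirror n, isSymmetry_mirror.adj _ _⟩ fun r hr ↦ ⟨?_, ?_⟩⟩
  · have := hr.1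
    simp only [mem_rectangle, mirror, RelHom.coeFn_mk] at *
    omega
  · exact mirror_mem_symmetrized.not.mpr hr.2

/-- The event that an open path coming from the top of `[0, 4n] × [0, 4n]` through the region
above the symmetrization of `s` stops next to `s`. -/
def descends (n : ℕ) (s : Set (ℤ × ℤ)) : Set (ℤ × ℤ → Bool) :=
  {ω | ∃ z, z.2 = 4 * (n : ℤ) ∧ ∃ b, Linked grid (openSites ω ∩ above n s) z b ∧
    ∃ a ∈ s, grid.Adj b a}

theorem dependsOn_descends : DependsOn (· ∈ descends n s) (above n s) :=
  fun ω ω' h ↦ by simp only [descends, Set.mem_ofPred_eq, openSites_inter_congr h]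

theorem IsCrossing.bottomTop_subset (h : IsCrossing n s p q) (hn : 0 < n) :
    bottomTop 0 (4 * n) 0 (4 * n) ⊆ descends n s ∪ (· ∘ mirror n) ⁻¹' descends n s := by
  rintro ω ⟨v, hv, z, hz, hvz⟩
  rw [Set.mem_ofPred_eq] at hv hz
  set R := rectangle 0 (4 * n) 0 (4 * n)
  have hzs : z ∉ symmetrized n s := fun hzs ↦ by
    have := h.symmetrized_subset hzs
    rw [mem_rectangle] at this
    omega
  obtain hzv | ⟨b, hzb, a, ⟨-, ha⟩, hba⟩ := hvz.symm.diff_or_exists_adj hzs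
  · obtain ⟨r, hr, hr'⟩ := h.nonempty_symmetrized_inter hzv.symm (fun r hr ↦ hr.1.2.1) hv.le
      (by omega)
    exact absurd hr hr'.2
  have hb : Linked grid (openSites ω ∩ above n s) z b :=
    hzb.component.mono fun r hr ↦
      ⟨hr.mem_right.1.1, z, hz, hr.mono (Set.sdiff_subset_sdiff_left Set.inter_subset_right)⟩
  obtain ha | ha := ha
  · exact .inl ⟨z, hz, b, hb, a, ha, hba⟩
  · refine .inr ⟨mirror n z, hz, mirror n b, ?_, mirror n a, ha, isSymmetry_mirror.adj _ _ hba⟩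
    have hω : (ω ∘ mirror n) ∘ mirror n = ω := funext fun r ↦ congrArg ω mirror_mirror
    exact isSymmetry_mirror.linked mapsTo_mirror_above (by rwa [hω])

theorem isLocal_descends : IsLocal (descends n s) :=
  isLocal_of_finite ((rectangle_finite ..).subset above_subset) dependsOn_descends

theorem IsCrossing.half_real_bottomTop_le (h : IsCrossing n s p q) (hn : 0 < n) :
    ℙ (bottomTop 0 (4 * n) 0 (4 * n)) / 2 ≤ ℙ (descends n s) := by
  have hmirror : ℙ ((· ∘ mirror n) ⁻¹' descends n s) = ℙ (descends n s) :=
    (measurePreserving_comp_of_injective isSymmetry_mirror.injective).measureReal_preimage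
      isLocal_descends.measurableSet.nullMeasurableSet
  have := (measureReal_mono (μ := fairCoins (ℤ × ℤ)) (h.bottomTop_subset hn)).trans
    (measureReal_union_le _ _)
  linarith

theorem IsCrossing.disjoint_revealed_above (h : IsCrossing n s p q) (hs : s ⊆ openSites ω) :
    Disjoint (revealed n ω) (above n s) := by
  refine Set.disjoint_left.mpr fun u ⟨_, a, ha, hau⟩ ⟨z, hz, hzu⟩ ↦ ?_
  obtain ⟨b, ⟨-, hb⟩, hba⟩ := exists_linked_reach ha
  set R := rectangle 0 (4 * n) 0 (4 * n) \ symmetrized n s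
  have hbz : Linked grid (explored n ω ∪ R) b z :=
    ((hba.mono Set.subset_union_left).tail hau (.inr hzu.mem_right)).trans
      (hzu.symm.mono Set.subset_union_right)
  rw [Set.mem_ofPred_eq] at hz
  have hcol : ∀ r ∈ explored n ω ∪ R, 0 ≤ r.1 ∧ r.1 ≤ 4 * n := by
    rintro r (hr | hr)
    · have := (explored_subset hr).2
      rw [mem_rectangle] at this
      omega
    · exact hr.1.1
  obtain ⟨r, hrs, hr⟩ := h.nonempty_symmetrized_inter hbz hcol (by omega) (by omega)
  obtain hr | hr := hr
  · have hre := explored_subset hr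
    obtain hrs | hrs := hrs
    · exact hre.1 (hs hrs)
    · have := h.subset hrs
      have := hre.2
      simp only [mem_rectangle, mirror] at *
      omega
  · exact hr.2 hrs

/-- The event that an open path crosses `[0, 2n] × [0, 2n]` from left to right, and its left
endpoint is joined to the top of `[0, 4n] × [0, 4n]` inside that square. -/
def hook (n : ℕ) : Set (ℤ × ℤ → Bool) :=
  {ω | ∃ p : ℤ × ℤ, p.1 = 0 ∧
    (∃ q : ℤ × ℤ, q.1 = 2 * n ∧ Linked grid (openSites ω ∩ rectangle 0 (2 * n) 0 (2 * n)) p q) ∧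
    ∃ z : ℤ × ℤ, z.2 = 4 * n ∧ Linked grid (openSites ω ∩ rectangle 0 (4 * n) 0 (4 * n)) p z}

theorem isUpperSet_hook : IsUpperSet (hook n) :=
  fun _ _ hle ⟨p, hp, ⟨q, hq, hpq⟩, z, hz, hpz⟩ ↦
    ⟨p, hp, ⟨q, hq, hpq.mono (Set.inter_subset_inter_left _ (openSites_mono hle))⟩, z, hz,
      hpz.mono (Set.inter_subset_inter_left _ (openSites_mono hle))⟩

theorem square_subset_square :
    rectangle 0 (2 * n) 0 (2 * n) ⊆ rectangle 0 (4 * n) 0 (4 * n) := fun p hp ↦ by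
  rw [mem_rectangle] at *
  omega

theorem isLocal_hook : IsLocal (hook n) :=
  isLocal_of_finite (rectangle_finite 0 (4 * n) 0 (4 * n)) fun ω ω' h ↦ by
    simp only [hook, Set.mem_ofPred_eq, openSites_inter_congr h,
      openSites_inter_congr fun p hp ↦ h p (square_subset_square hp)]

theorem IsCrossing.mem_hook_of_mem_descends (h : IsCrossing n s p q) (hs : s ⊆ openSites ω)
    (hω : ω ∈ descends n s) : ω ∈ hook n := by
  obtain ⟨z, hz, b, hzb, a, ha, hba⟩ := hω
  have hsq : s ⊆ openSites ω ∩ rectangle 0 (2 * n) 0 (2 * n) := Set.subset_inter hs h.subset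
  have hza : Linked grid (openSites ω ∩ rectangle 0 (4 * n) 0 (4 * n)) z a :=
    (hzb.mono (Set.inter_subset_inter_right _ above_subset)).tail hba
      ⟨hs ha, square_subset_square (h.subset ha)⟩
  exact ⟨p, h.fst_left, ⟨q, h.fst_right, (h.linked q h.right_mem).mono hsq⟩, z, hz,
    ((h.linked a ha).mono (hsq.trans (Set.inter_subset_inter_right _ square_subset_square))).trans
      hza.symm⟩

theorem real_leftRight_mul_le_real_hook (hn : 0 < n) :
    ℙ (leftRight 0 (2 * n) 0 (2 * n)) * (ℙ (bottomTop 0 (4 * n) 0 (4 * n)) / 2) ≤ ℙ (hook n) := by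
  refine infinitePi_real_mul_le_of_exploration _ (D := explored n) (by positivity) isLocal_hook
    (finite_range_explored.subset (Set.image_subset_range _ _)) fun ω₀ hω₀ ↦ ?_
  obtain ⟨s, hs, p, q, h⟩ := exists_isCrossing_revealedOpen hω₀
  have hrev : (revealed n ω₀).Finite := (rectangle_finite ..).subset fun _ hp ↦ hp.1
  have habove : (above n s).Finite := (rectangle_finite ..).subset above_subset
  refine ⟨hrev.toFinset, habove.toFinset, descends n s, ?_, ?_, ?_,
    h.half_real_bottomTop_le hn, fun ω ⟨hω, hd⟩ ↦ ?_⟩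
  · simpa using h.disjoint_revealed_above (hs.trans revealedOpen_subset)
  · simpa using dependsOn_explored_eq ω₀
  · simpa using dependsOn_descends
  · have heq : revealedOpen n ω = revealedOpen n ω₀ := by
      rw [Set.mem_ofPred_eq] at hω
      simp only [revealedOpen, revealed, hω]
    exact h.mem_hook_of_mem_descends (hs.trans (heq ▸ revealedOpen_subset)) hd

theorem real_hook_ge (hn : 0 < n) : 1 / 8 ≤ ℙ (hook n) := by
  have hsmall := half_le_real_bottomTop_square n hn
  have hbig := half_le_real_bottomTop_square (2 * n) (by omega)
  have h := real_leftRight_mul_le_real_hook hn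
  rw [real_leftRight_eq_real_bottomTop] at h
  have e : 2 * ((2 * n : ℕ) : ℤ) = 4 * n := by push_cast; ring
  rw [e] at hbig
  nlinarith

end Hook

/-! ### Gluing crossings -/

section Gluing

variable {x₀ x₁ y₀ y₁ x₀' x₁' y₀' y₁' : ℤ} {ω : ℤ × ℤ → Bool} {S : Set (ℤ × ℤ)}
  {p q v w : ℤ × ℤ} {n : ℕ}

theorem real_mul_mul_le_inter {E₁ E₂ E₃ : Set (ℤ × ℤ → Bool)} (h₁ : IsUpperSet E₁)
    (h₂ : IsUpperSet E₂) (h₃ : IsUpperSet E₃) (hl₁ : IsLocal E₁) (hl₂ : IsLocal E₂)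
    (hl₃ : IsLocal E₃) : ℙ E₁ * ℙ E₂ * ℙ E₃ ≤ ℙ (E₁ ∩ E₂ ∩ E₃) :=
  (mul_le_mul_of_nonneg_right (infinitePi_real_mul_le_inter _ h₁ h₂ hl₁ hl₂)
    measureReal_nonneg).trans
    (infinitePi_real_mul_le_inter _ (h₁.inter h₂) h₃ (hl₁.inter hl₂) hl₃)

theorem Linked.mono_rectangle (h : Linked grid (S ∩ rectangle x₀ x₁ y₀ y₁) p q)
    (hx₀ : x₀' ≤ x₀) (hx₁ : x₁ ≤ x₁') (hy₀ : y₀' ≤ y₀) (hy₁ : y₁ ≤ y₁') :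
    Linked grid (S ∩ rectangle x₀' x₁' y₀' y₁') p q :=
  h.mono <| Set.inter_subset_inter_right _ fun r hr ↦ by
    rw [mem_rectangle] at *
    omega

theorem linked_of_crossing_rectangle (hpq : Linked grid (S ∩ rectangle x₀ x₁ y₀ y₁) p q)
    (hp : p.1 = x₀) (hq : q.1 = x₁) (hvw : Linked grid (S ∩ rectangle x₀ x₁ y₀ y₁) v w)
    (hv : v.2 = y₀) (hw : w.2 = y₁) : Linked grid (S ∩ rectangle x₀ x₁ y₀ y₁) p v := by
  subst hp hq hv hw
  obtain ⟨r, hpr, hvr⟩ := exists_linked_of_crossing hpq hvw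
    (fun _ hr ↦ hr.2.1) fun _ hr ↦ hr.2.2
  exact hpr.trans hvr.symm

/-- The reflection of the square `[0, 2n] × [0, 2n]` in its horizontal axis. -/
def flipVertical (n : ℕ) (p : ℤ × ℤ) : ℤ × ℤ := (p.1, 2 * n - p.2)

theorem isSymmetry_flipVertical : IsSymmetry (flipVertical n) := .reflectSnd _

theorem hook_inter_flipVertical_subset :
    hook n ∩ (· ∘ flipVertical n) ⁻¹' hook n ∩ bottomTop 0 (2 * n) 0 (2 * n) ⊆
      bottomTop 0 (4 * n) (-(2 * n)) (4 * n) := by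
  rintro ω ⟨⟨⟨p, hp, ⟨q, hq, hpq⟩, z, hz, hpz⟩, p', hp', ⟨q', hq', hpq'⟩, z', hz', hpz'⟩,
    v, hv, w, hw, hvw⟩
  replace hpq' := isSymmetry_flipVertical.linked (T := rectangle 0 (2 * n) 0 (2 * n)) (fun r hr ↦ by
    simp only [mem_rectangle, flipVertical] at *; omega) hpq'
  replace hpz' := isSymmetry_flipVertical.linked (T := rectangle 0 (4 * n) (-(2 * n)) (2 * n))
    (fun r hr ↦ by simp only [mem_rectangle, flipVertical] at *; omega) hpz'
  have hpv := linked_of_crossing_rectangle hpq hp hq hvw hv hw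
  have hpv' := linked_of_crossing_rectangle hpq' hp' hq' hvw hv hw
  refine ⟨flipVertical n z', ?_, z, hz, ?_⟩
  · rw [Set.mem_ofPred_eq, flipVertical, hz']
    ring
  · have hpp' := (hpv'.trans hpv.symm).mono_rectangle (x₀' := 0) (x₁' := 4 * n)
      (y₀' := -(2 * n)) (y₁' := 4 * n) (by omega) (by omega) (by omega) (by omega)
    exact (hpz'.mono_rectangle (by omega) (by omega) (by omega) (by omega)).symm.trans <|
      hpp'.trans <| hpz.mono_rectangle (by omega) (by omega) (by omega) (by omega)

theorem real_leftRight_three_halves_ge (hn : 0 < n) :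
    1 / 128 ≤ ℙ (leftRight 0 (6 * n) 0 (4 * n)) := by
  have hflip : ℙ ((· ∘ flipVertical n) ⁻¹' hook n) = ℙ (hook n) :=
    (measurePreserving_comp_of_injective isSymmetry_flipVertical.injective).measureReal_preimage
      isLocal_hook.measurableSet.nullMeasurableSet
  have hhook := real_hook_ge hn
  have hsquare := half_le_real_bottomTop_square n hn
  calc (1 / 128 : ℝ) = 1 / 8 * (1 / 8) * (1 / 2) := by norm_num
    _ ≤ ℙ (hook n) * ℙ ((· ∘ flipVertical n) ⁻¹' hook n) * ℙ (bottomTop 0 (2 * n) 0 (2 * n)) := by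
      rw [hflip]
      gcongr
    _ ≤ ℙ (hook n ∩ (· ∘ flipVertical n) ⁻¹' hook n ∩ bottomTop 0 (2 * n) 0 (2 * n)) :=
      real_mul_mul_le_inter isUpperSet_hook
        (isUpperSet_hook.preimage fun _ _ hle p ↦ hle (flipVertical n p)) isUpperSet_connects
        isLocal_hook (isLocal_hook.preimage_comp _) (isLocal_connects (rectangle_finite ..))
    _ ≤ ℙ (bottomTop 0 (4 * n) (-(2 * n)) (4 * n)) :=
      measureReal_mono hook_inter_flipVertical_subset
    _ = ℙ (leftRight (-(2 * n)) (4 * n) 0 (4 * n)) := (real_leftRight_eq_real_bottomTop ..).symm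
    _ ≤ ℙ (leftRight 0 (6 * n) 0 (4 * n)) :=
      real_leftRight_le_of_translate n 0 (by ring) (by ring) (by simp) (by simp)

theorem real_leftRight_mul_le {a b h j : ℤ} (hj : 0 ≤ j) (ha : 2 * j + h ≤ a)
    (hb : a ≤ 2 * j + b) :
    ℙ (leftRight 0 a 0 h) * ℙ (leftRight 0 b 0 h) * ℙ (bottomTop 0 h 0 h) ≤
      ℙ (leftRight 0 (2 * j + b) 0 h) := by
  have htop : ℙ (bottomTop 0 h 0 h) ≤ ℙ (bottomTop (2 * j) (2 * j + h) 0 h) := by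
    simp only [← real_leftRight_eq_real_bottomTop]
    exact real_leftRight_le_of_translate 0 j (by simp) (by simp) (by simp) (by omega)
  have hright : ℙ (leftRight 0 b 0 h) ≤ ℙ (leftRight (2 * j) (2 * j + b) 0 h) :=
    real_leftRight_le_of_translate j 0 (by simp) (by omega) (by simp) (by simp)
  calc _ ≤ ℙ (leftRight 0 a 0 h) * ℙ (leftRight (2 * j) (2 * j + b) 0 h) *
        ℙ (bottomTop (2 * j) (2 * j + h) 0 h) := by gcongr
    _ ≤ ℙ (leftRight 0 a 0 h ∩ leftRight (2 * j) (2 * j + b) 0 h ∩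
        bottomTop (2 * j) (2 * j + h) 0 h) :=
      real_mul_mul_le_inter isUpperSet_connects isUpperSet_connects isUpperSet_connects
        (isLocal_connects (rectangle_finite ..)) (isLocal_connects (rectangle_finite ..))
        (isLocal_connects (rectangle_finite ..))
    _ ≤ ℙ (leftRight 0 (2 * j + b) 0 h) := by
      refine measureReal_mono ?_
      rintro ω ⟨⟨⟨p, hp, q, hq, hpq⟩, p', hp', q', hq', hpq'⟩, v, hv, w, hw, hvw⟩
      have hpv := linked_of_crossing_rectangle hpq hp hq
        (hvw.mono_rectangle (by omega) (by omega) le_rfl le_rfl) hv hw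
      have hpv' := linked_of_crossing_rectangle hpq' hp' hq'
        (hvw.mono_rectangle (by omega) (by omega) le_rfl le_rfl) hv hw
      exact ⟨p, hp, q', hq', (hpv.mono_rectangle (by omega) (by omega) le_rfl le_rfl).trans <|
        (hpv'.symm.trans hpq').mono_rectangle (by omega) (by omega) le_rfl le_rfl⟩

theorem div_le_real_leftRight_of_le {c : ℝ} {a j : ℤ} (hn : 0 < n) (hj : 0 ≤ j)
    (ha : 2 * j + 4 * n ≤ a) (ha' : a ≤ 2 * j + 6 * n) (hc : c ≤ ℙ (leftRight 0 a 0 (4 * n))) :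
    c / 256 ≤ ℙ (leftRight 0 (2 * j + 6 * n) 0 (4 * n)) := by
  have hsquare := half_le_real_bottomTop_square (2 * n) (by omega)
  rw [show 2 * ((2 * n : ℕ) : ℤ) = 4 * n by push_cast; ring] at hsquare
  calc c / 256 ≤ ℙ (leftRight 0 a 0 (4 * n)) * (1 / 128) * (1 / 2) := by linarith
    _ ≤ ℙ (leftRight 0 a 0 (4 * n)) * ℙ (leftRight 0 (6 * n) 0 (4 * n)) *
        ℙ (bottomTop 0 (4 * n) 0 (4 * n)) := by
      gcongr
      exact real_leftRight_three_halves_ge hn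
    _ ≤ ℙ (leftRight 0 (2 * j + 6 * n) 0 (4 * n)) := real_leftRight_mul_le hj ha ha'

theorem real_leftRight_double_ge {N : ℕ} (hN : 2 ≤ N) :
    1 / 128 / 256 ^ 3 ≤ ℙ (leftRight (-(2 * N)) (2 * N) 0 (2 * N)) := by
  obtain ⟨k, hk⟩ : ∃ k : ℕ, 0 < k ∧ 2 * k ≤ N ∧ N ≤ 3 * k := ⟨N / 2, by omega⟩
  have h₁ := div_le_real_leftRight_of_le (j := k) hk.1 (by omega) (by omega) (by omega)
    (real_leftRight_three_halves_ge hk.1)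
  have h₂ := div_le_real_leftRight_of_le (j := N - k) hk.1 (by omega) (by omega) (by omega) h₁
  have h₃ := div_le_real_leftRight_of_le (j := 2 * N - 3 * k) hk.1 (by omega) (by omega)
    (by omega) h₂
  calc (1 / 128 / 256 ^ 3 : ℝ) = 1 / 128 / 256 / 256 / 256 := by norm_num
    _ ≤ _ := h₃
    _ ≤ _ := real_leftRight_le_of_translate (-N) 0 (by ring) (by ring) (by simp) (by omega)

theorem real_leftRight_pos (hx : x₀ ≤ x₁) (hy : 0 ≤ y₁) : 0 < ℙ (leftRight x₀ x₁ 0 y₁) := by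
  refine fairCoins_real_pos (isLocal_connects (rectangle_finite ..))
    ⟨fun _ ↦ true, (x₀, 0), rfl, (x₁, 0), rfl, ?_⟩
  set T := openSites (fun _ ↦ true) ∩ rectangle x₀ x₁ 0 y₁
  have hmem (x : ℤ) (h₀ : x₀ ≤ x) (h₁ : x ≤ x₁) : (x, 0) ∈ T := by
    refine ⟨mem_openSites.mpr ?_, ?_⟩
    · grind
    · rw [mem_rectangle]
      omega
  suffices ∀ x, x₀ ≤ x → x ≤ x₁ → Linked grid T (x₀, 0) (x, 0) from this x₁ hx le_rfl
  intro x hx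
  induction x, hx using Int.leInduction with
  | base => exact fun h ↦ .refl (hmem x₀ le_rfl h)
  | succ x hx ih =>
    exact fun h ↦ (ih (by omega)).tail (by simp [grid_adj]) (hmem _ (by omega) h)

theorem exists_pos_le_real_leftRight :
    ∃ c : ℝ, 0 < c ∧ ∀ N : ℕ, 1 ≤ N → c ≤ ℙ (leftRight (-(2 * N)) (2 * N) 0 (2 * N)) := by
  refine ⟨min (1 / 128 / 256 ^ 3) (ℙ (leftRight (-2) 2 0 2)),
    lt_min (by norm_num) (real_leftRight_pos (by norm_num) (by norm_num)), fun N hN ↦ ?_⟩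
  obtain rfl | hN := hN.eq_or_lt
  · exact min_le_right _ _
  · exact (min_le_left _ _).trans (real_leftRight_double_ge hN)

end Gluing

/-! ### Transfer to the edges of the square lattice -/

section Transfer

variable {ω : Config 2} {η : ℤ × ℤ → Bool} {x y z : Vertex 2} {a b : ℤ × ℤ} {N : ℕ}

theorem IsBernoulli.eq_fairCoins {d : ℕ} {μ : Measure (Config d)} (hμ : IsBernoulli d (1 / 2) μ) :
    μ = fairCoins (Edge d) := by
  refine Perc.eq_fairCoins fun s f ↦ (hμ.2 s f).trans ?_
  have hhalf (e : Edge d) : (if f e then (1 / 2 : ℝ) else 1 - 1 / 2) = 2⁻¹ := by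
    split_ifs <;> norm_num
  simp only [hhalf, Finset.prod_const]
  rw [ENNReal.ofReal_pow (by norm_num), ENNReal.ofReal_inv_of_pos two_pos, ENNReal.ofReal_ofNat]

/-- The lower left endpoint of the edge whose midpoint corresponds to the point `a` of the doubled
lattice. It is the vertex itself if `a` corresponds to a vertex. -/
def lowerEnd (a : ℤ × ℤ) : Vertex 2 := ![a.1 / 2, a.2 / 2]

/-- The upper right endpoint of the edge whose midpoint corresponds to the point `a` of the doubled
lattice. It is the vertex itself if `a` corresponds to a vertex. -/
def upperEnd (a : ℤ × ℤ) : Vertex 2 := ![(a.1 + 1) / 2, (a.2 + 1) / 2]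

/-- The midpoint of an edge, as a point of the doubled lattice. -/
def edgeMidpoint (e : Edge 2) : ℤ × ℤ :=
  Sym2.lift ⟨fun x y : Vertex 2 ↦ (x 0 + y 0, x 1 + y 1), fun x y ↦ by simp [add_comm]⟩ e.1

theorem adj_iff : adj x y ↔ (x 0 - y 0).natAbs + (x 1 - y 1).natAbs = 1 := by
  rw [adj, Fin.sum_univ_two]

theorem vertex_eq_iff : x = y ↔ x 0 = y 0 ∧ x 1 = y 1 := by
  rw [funext_iff, Fin.forall_fin_two]

theorem coe_edge_eq (e : Edge 2) :
    (e : Sym2 (Vertex 2)) = s(lowerEnd (edgeMidpoint e), upperEnd (edgeMidpoint e)) := by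
  obtain ⟨_, x, y, h, rfl⟩ := e
  simp only [edgeMidpoint, Sym2.lift_mk, Sym2.eq_iff, vertex_eq_iff, lowerEnd, upperEnd,
    Matrix.cons_val_zero, Matrix.cons_val_one]
  rw [adj_iff] at h
  omega

theorem injective_edgeMidpoint : Function.Injective edgeMidpoint := fun e e' h ↦
  Subtype.ext (by rw [coe_edge_eq e, coe_edge_eq e', h])

theorem step_symm (h : step ω x y) : step ω y x := by
  obtain ⟨hxy, h⟩ := h
  exact ⟨by rw [adj_iff] at *; omega, (congrArg ω (Subtype.ext Sym2.eq_swap)).trans h⟩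

theorem step_lowerEnd_upperEnd (hodd : (a.1 + a.2) % 2 = 1) (ha : η a) :
    step (η ∘ edgeMidpoint) (lowerEnd a) (upperEnd a) := by
  refine ⟨?_, ?_⟩
  · simp only [adj_iff, lowerEnd, upperEnd, Matrix.cons_val_zero, Matrix.cons_val_one]
    omega
  · have hmid : (a.1 / 2 + (a.1 + 1) / 2, a.2 / 2 + (a.2 + 1) / 2) = a :=
      Prod.ext (by dsimp; omega) (by dsimp; omega)
    exact (congrArg η hmid).trans ha

theorem lowerEnd_mem_rect (ha : a ∈ rectangle (-(2 * N)) (2 * N) 0 (2 * N)) :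
    lowerEnd a ∈ rect N := by
  rw [mem_rectangle] at ha
  simp only [rect, Set.mem_ofPred_eq, lowerEnd, Matrix.cons_val_zero, Matrix.cons_val_one]
  omega

theorem upperEnd_mem_rect (ha : a ∈ rectangle (-(2 * N)) (2 * N) 0 (2 * N)) :
    upperEnd a ∈ rect N := by
  rw [mem_rectangle] at ha
  simp only [rect, Set.mem_ofPred_eq, upperEnd, Matrix.cons_val_zero, Matrix.cons_val_one]
  omega

theorem ConnWithin.tail {A : Set (Vertex 2)} (h : ConnWithin ω A x y) (hyz : step ω y z)
    (hy : y ∈ A) (hz : z ∈ A) : ConnWithin ω A x z :=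
  ⟨h.1, h.2.tail ⟨hyz, hy, hz⟩⟩

theorem connWithin_lowerEnd_iff
    (ha : a ∈ openSites η ∩ rectangle (-(2 * N)) (2 * N) 0 (2 * N)) :
    ConnWithin (η ∘ edgeMidpoint) (rect N) x (lowerEnd a) ↔
      ConnWithin (η ∘ edgeMidpoint) (rect N) x (upperEnd a) := by
  have hl := lowerEnd_mem_rect ha.2
  have hu := upperEnd_mem_rect ha.2
  obtain ha | ⟨hodd, ha⟩ := ha.1
  · have : lowerEnd a = upperEnd a := by
      simp only [vertex_eq_iff, lowerEnd, upperEnd, Matrix.cons_val_zero, Matrix.cons_val_one]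
      omega
    rw [this]
  · have hstep := step_lowerEnd_upperEnd hodd ha
    exact ⟨fun h ↦ h.tail hstep hl hu, fun h ↦ h.tail (step_symm hstep) hu hl⟩

theorem lowerEnd_eq_or_of_adj (hab : grid.Adj a b) :
    lowerEnd a = lowerEnd b ∨ lowerEnd a = upperEnd b ∨
      upperEnd a = lowerEnd b ∨ upperEnd a = upperEnd b := by
  rw [grid_adj] at hab
  simp only [vertex_eq_iff, lowerEnd, upperEnd, Matrix.cons_val_zero, Matrix.cons_val_one]
  omega

theorem comp_edgeMidpoint_mem_horizontalCrossing
    (hη : η ∈ leftRight (-(2 * N)) (2 * N) 0 (2 * N)) :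
    η ∘ edgeMidpoint ∈ HorizontalCrossing N := by
  obtain ⟨p, hp, q, hq, h⟩ := hη
  rw [Set.mem_ofPred_eq] at hp hq
  refine ⟨lowerEnd p, lowerEnd q, ?_, ?_, ?_⟩
  · rw [lowerEnd, Matrix.cons_val_zero, hp]
    omega
  · rw [lowerEnd, Matrix.cons_val_zero, hq]
    omega
  clear hq
  induction h using Linked.induction with
  | refl hp => exact ⟨lowerEnd_mem_rect hp.2, .refl⟩
  | @tail a b hpa hab hb ih =>
    have ih' := (connWithin_lowerEnd_iff hpa.mem_right).mp ih
    obtain h | h | h | h := lowerEnd_eq_or_of_adj hab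
    · exact h ▸ ih
    · exact (connWithin_lowerEnd_iff hb).mpr (h ▸ ih)
    · exact h ▸ ih'
    · exact (connWithin_lowerEnd_iff hb).mpr (h ▸ ih')

theorem IsBernoulli.real_leftRight_le {μ : Measure (Config 2)} (hμ : IsBernoulli 2 (1 / 2) μ)
    (N : ℕ) : ENNReal.ofReal (ℙ (leftRight (-(2 * N)) (2 * N) 0 (2 * N))) ≤
      μ (HorizontalCrossing N) := by
  rw [ofReal_measureReal, hμ.eq_fairCoins,
    ← (measurePreserving_comp_of_injective injective_edgeMidpoint).map_eq]
  exact (measure_mono fun η ↦ comp_edgeMidpoint_mem_horizontalCrossing).trans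
    (Measure.le_map_apply
      (measurePreserving_comp_of_injective injective_edgeMidpoint).measurable.aemeasurable _)

end Transfer

/-- RSW estimate for critical Bernoulli percolation on `ℤ²`: there exists `c > 0` such
that for all `n ≥ 1`, `ℙ_{1/2}[[−n,n] × [0,n] is crossed horizontally] ≥ c`. -/
theorem rsw_crossing
    (μ : Measure (Config 2)) (hμ : IsBernoulli 2 (1 / 2) μ) :
    ∃ c : ℝ, 0 < c ∧ ∀ n : ℕ, 1 ≤ n →
      ENNReal.ofReal c ≤ μ (HorizontalCrossing n) := by
  obtain ⟨c, hc, h⟩ := exists_pos_le_real_leftRight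
  exact ⟨c, hc, fun n hn ↦ (ENNReal.ofReal_le_ofReal (h n hn)).trans (hμ.real_leftRight_le n)⟩

end Perc
end

section
/- Russo-type formula for FK-percolation: for every finite graph G = (V,E), every boundary set B ⊆ V and boundary condition ξ (a partition of B), every q ≥ 1 and every increasing event A ⊆ {0,1}^E, the map p ↦ φ^ξ_{G,p,q}[A] is differentiable on (0,1) and for every p ∈ (0,1) its derivative equals (1/(p(1−p))) · Σ_{e∈E} ( φ^ξ_{G,p,q}[A ∩ {ω(e) = 1}] − φ^ξ_{G,p,q}[A] · φ^ξ_{G,p,q}[ω(e) = 1] ). -/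
namespace FK

/-- An event `A ⊆ {0,1}^E` is increasing if it is stable under opening edges. -/
def Increasing {E : Type*} (A : Set (E → Bool)) : Prop :=
  ∀ ⦃ω ω' : E → Bool⦄, (∀ e, ω e ≤ ω' e) → ω ∈ A → ω' ∈ A

variable {V Eg : Type*}

/-- Two vertices are related in one step if they are joined by an open edge, or if they
lie in a common class of the boundary condition `ξ`. -/
def fkStep [DecidableEq V] (ends : Eg → Sym2 V) {B : Finset V} (ξ : Finpartition B)
    (ω : Eg → Bool) (x y : V) : Prop :=
  (∃ e : Eg, ω e = true ∧ ends e = s(x, y)) ∨ ∃ t ∈ ξ.parts, x ∈ t ∧ y ∈ t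

/-- `k(ω^ξ)`: the number of connected components of the spanning subgraph of open edges
after identifying, for each class of `ξ`, all vertices of that class (isolated vertices
count as components). -/
noncomputable def numComp [DecidableEq V] (ends : Eg → Sym2 V) {B : Finset V}
    (ξ : Finpartition B) (ω : Eg → Bool) : ℕ :=
  Set.ncard {C : Set V | ∃ x, C = {y | Relation.EqvGen (fkStep ends ξ ω) x y}}

/-- The FK weight `p^{|ω|} (1−p)^{|E∖ω|} q^{k(ω^ξ)}` of a configuration `ω`. -/
noncomputable def fkWeight [DecidableEq V] [Fintype Eg] (ends : Eg → Sym2 V)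
    {B : Finset V} (ξ : Finpartition B) (p q : ℝ) (ω : Eg → Bool) : ℝ :=
  p ^ (Finset.univ.filter fun e : Eg => ω e = true).card *
    (1 - p) ^ (Finset.univ.filter fun e : Eg => ω e = false).card *
    q ^ numComp ends ξ ω

/-- `φ^ξ_{G,p,q}[A]`: the FK-percolation probability of the event `A`. -/
noncomputable def fkProb [DecidableEq V] [Fintype Eg] [DecidableEq Eg]
    (ends : Eg → Sym2 V) {B : Finset V} (ξ : Finpartition B) (p q : ℝ)
    (A : Set (Eg → Bool)) : ℝ :=
  (∑ ω : Eg → Bool, A.indicator (fkWeight ends ξ p q) ω) /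
    ∑ ω : Eg → Bool, fkWeight ends ξ p q ω

/-!
If every weight `w i` of a finite family has logarithmic derivative `S i` (the *score*), then the
weighted mean of an observable `f` has derivative `Cov_w(S, f)`: differentiating the numerator gives
the mean of `S f`, differentiating the normalization subtracts the product of the means. The FK
weight is a product over the edges of `p` or `1 - p`, times a factor independent of `p`, so its
score is `(p (1 - p))⁻¹ ∑ e, (ω(e) - p)`. The constants `p` do not contribute to the covariance,
which leaves the sum over the edges `e` of the covariances of `ω(e)` with `f`.
-/

section WeightedCovariance

open Finset

variable {𝕜 F ι κ : Type*} [Field 𝕜] [AddCommGroup F] [Module 𝕜 F]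

/-- The covariance of a scalar observable `S` and a vector-valued observable `f` under the weights
`w` on the finite set `t`. As for `Finset.centerMass`, the weights need not be normalized. -/
def weightedCov (t : Finset ι) (w S : ι → 𝕜) (f : ι → F) : F :=
  t.centerMass w (S • f) - t.centerMass w S • t.centerMass w f

variable (t : Finset ι) (w : ι → 𝕜)

lemma centerMass_sum (s : Finset κ) (f : κ → ι → F) :
    t.centerMass w (∑ k ∈ s, f k) = ∑ k ∈ s, t.centerMass w (f k) := by
  simp only [centerMass, Finset.sum_apply, smul_sum]
  exact sum_comm

lemma centerMass_sub (f g : ι → F) :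
    t.centerMass w (f - g) = t.centerMass w f - t.centerMass w g := by
  simp only [centerMass, Pi.sub_apply, smul_sub, sum_sub_distrib]

lemma weightedCov_const_smul_left (c : 𝕜) (S : ι → 𝕜) (f : ι → F) :
    weightedCov t w (c • S) f = c • weightedCov t w S f := by
  have hmul : t.centerMass w ((c • S) • f) = c • t.centerMass w (S • f) := by
    rw [smul_assoc]
    exact centerMass_smul c t (S • f)
  have hmean : t.centerMass w (c • S) = c • t.centerMass w S := centerMass_smul c t S
  rw [weightedCov, weightedCov, hmul, hmean, smul_sub, smul_assoc]

lemma weightedCov_sum_left (s : Finset κ) (S : κ → ι → 𝕜) (f : ι → F) :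
    weightedCov t w (∑ k ∈ s, S k) f = ∑ k ∈ s, weightedCov t w (S k) f := by
  simp only [weightedCov, sum_smul, centerMass_sum, sum_sub_distrib]

variable {w}

lemma weightedCov_sub_const_left (hw : ∑ i ∈ t, w i ≠ 0) (S : ι → 𝕜) (c : 𝕜) (f : ι → F) :
    weightedCov t w (S - Function.const ι c) f = weightedCov t w S f := by
  have hmul : t.centerMass w (Function.const ι c • f) = c • t.centerMass w f :=
    centerMass_smul c t f
  have hmean : t.centerMass w (Function.const ι c) = c := centerMass_const hw c
  simp only [weightedCov, sub_smul, centerMass_sub, hmul, hmean]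
  abel

end WeightedCovariance

section LogarithmicDerivative

open Finset

variable {𝕜 ι : Type*} [NontriviallyNormedField 𝕜] {x : 𝕜}

lemma hasDerivAt_prod_of_score {R : Type*} [NormedCommRing R] [NormedAlgebra 𝕜 R] {t : Finset ι}
    {w : ι → 𝕜 → R} {S : ι → R} (hw : ∀ i ∈ t, HasDerivAt (w i) (S i * w i x) x) :
    HasDerivAt (fun r => ∏ i ∈ t, w i r) ((∑ i ∈ t, S i) * ∏ i ∈ t, w i x) x := by
  classical
  refine (HasDerivAt.fun_finsetProd hw).congr_deriv ?_
  rw [sum_mul]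
  refine sum_congr rfl fun i hi => ?_
  rw [smul_eq_mul, mul_left_comm, prod_erase_mul t (w · x) hi]

lemma hasDerivAt_centerMass_of_score {F : Type*} [NormedAddCommGroup F] [NormedSpace 𝕜 F]
    {t : Finset ι} {w : 𝕜 → ι → 𝕜} {S : ι → 𝕜}
    (hw : ∀ i ∈ t, HasDerivAt (fun r => w r i) (S i * w x i) x) (hZ : ∑ i ∈ t, w x i ≠ 0)
    (f : ι → F) :
    HasDerivAt (fun r => t.centerMass (w r) f) (weightedCov t (w x) S f) x := by
  have hnum : HasDerivAt (fun r => ∑ i ∈ t, w r i • f i) (∑ i ∈ t, (S i * w x i) • f i) x :=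
    HasDerivAt.fun_sum fun i hi => (hw i hi).smul_const (f i)
  have hden : HasDerivAt (fun r => ∑ i ∈ t, w r i) (∑ i ∈ t, S i * w x i) x :=
    HasDerivAt.fun_sum hw
  refine ((hden.fun_inv hZ).fun_smul hnum).congr_deriv ?_
  simp only [weightedCov, centerMass, Pi.smul_apply', smul_smul, smul_eq_mul, mul_comm (w x _)]
  module

lemma hasDerivAt_ite_one_sub (hx₀ : x ≠ 0) (hx₁ : x ≠ 1) (P : Prop) [Decidable P] :
    HasDerivAt (fun r : 𝕜 => if P then r else 1 - r)
      ((x * (1 - x))⁻¹ * ((if P then 1 else 0) - x) * if P then x else 1 - x) x := by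
  have hx₁' : 1 - x ≠ 0 := sub_ne_zero.2 hx₁.symm
  split_ifs
  · exact (hasDerivAt_id x).congr_deriv (by field_simp)
  · exact ((hasDerivAt_id x).const_sub 1).congr_deriv (by field_simp; ring)

end LogarithmicDerivative

section FKMeasure

open Finset

variable [DecidableEq V] [Fintype Eg] (ends : Eg → Sym2 V) {B : Finset V} (ξ : Finpartition B)
  {p q : ℝ}

lemma fkWeight_eq_prod (p q : ℝ) (ω : Eg → Bool) :
    fkWeight ends ξ p q ω = (∏ e, if ω e = true then p else 1 - p) * q ^ numComp ends ξ ω := by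
  simp only [fkWeight, prod_ite, prod_const, Bool.not_eq_true]

lemma fkWeight_pos (hp : p ∈ Set.Ioo (0 : ℝ) 1) (hq : 0 < q) (ω : Eg → Bool) :
    0 < fkWeight ends ξ p q ω :=
  mul_pos (mul_pos (pow_pos hp.1 _) (pow_pos (sub_pos.2 hp.2) _)) (pow_pos hq _)

lemma hasDerivAt_fkWeight (hp₀ : p ≠ 0) (hp₁ : p ≠ 1) (q : ℝ) (ω : Eg → Bool) :
    HasDerivAt (fun r => fkWeight ends ξ r q ω)
      (((p * (1 - p))⁻¹ * ∑ e, ((if ω e = true then 1 else 0) - p)) * fkWeight ends ξ p q ω) p := by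
  simp only [fkWeight_eq_prod, ← mul_assoc, mul_sum]
  exact (hasDerivAt_prod_of_score fun e _ =>
    hasDerivAt_ite_one_sub hp₀ hp₁ (ω e = true)).mul_const _

variable [DecidableEq Eg]

lemma fkProb_eq_centerMass (p q : ℝ) (A : Set (Eg → Bool)) :
    fkProb ends ξ p q A = univ.centerMass (fkWeight ends ξ p q)
      (A.indicator (1 : (Eg → Bool) → ℝ)) := by
  classical
  simp only [fkProb, centerMass, Set.indicator_apply, Pi.one_apply, smul_eq_mul, mul_ite, mul_one,
    mul_zero, div_eq_inv_mul]

lemma weightedCov_fkWeight_indicator (p q : ℝ) (A C : Set (Eg → Bool)) :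
    weightedCov univ (fkWeight ends ξ p q) (C.indicator (1 : (Eg → Bool) → ℝ))
        (A.indicator (1 : (Eg → Bool) → ℝ)) =
      fkProb ends ξ p q (A ∩ C) - fkProb ends ξ p q A * fkProb ends ξ p q C := by
  rw [Set.inter_comm, mul_comm (fkProb ends ξ p q A)]
  simp only [weightedCov, fkProb_eq_centerMass, Set.inter_indicator_one, smul_eq_mul]

theorem hasDerivAt_centerMass_fkWeight {F : Type*} [NormedAddCommGroup F] [NormedSpace ℝ F]
    (hp₀ : p ≠ 0) (hp₁ : p ≠ 1) (hZ : ∑ ω, fkWeight ends ξ p q ω ≠ 0) (f : (Eg → Bool) → F) :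
    HasDerivAt (fun r => univ.centerMass (fkWeight ends ξ r q) f)
      ((p * (1 - p))⁻¹ • ∑ e, weightedCov univ (fkWeight ends ξ p q)
        ({ω : Eg → Bool | ω e = true}.indicator (1 : (Eg → Bool) → ℝ)) f) p := by
  refine (hasDerivAt_centerMass_of_score
    (fun ω _ => hasDerivAt_fkWeight ends ξ hp₀ hp₁ q ω) hZ f).congr_deriv ?_
  have hscore : (fun ω : Eg → Bool =>
        (p * (1 - p))⁻¹ * ∑ e, ((if ω e = true then 1 else 0) - p)) =
      (p * (1 - p))⁻¹ • ∑ e, ({ω : Eg → Bool | ω e = true}.indicator (1 : (Eg → Bool) → ℝ) -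
        Function.const _ p) := by
    ext ω
    simp only [Pi.smul_apply, Finset.sum_apply, Pi.sub_apply, Set.indicator_apply,
      Set.mem_ofPred_eq, Pi.one_apply, Function.const_apply, smul_eq_mul]
  simp only [hscore, weightedCov_const_smul_left, weightedCov_sum_left,
    weightedCov_sub_const_left univ hZ]

theorem fk_russo_formula_general (hp : p ∈ Set.Ioo (0 : ℝ) 1) (hq : 0 < q) (A : Set (Eg → Bool)) :
    HasDerivAt (fun r : ℝ => fkProb ends ξ r q A)
      ((1 / (p * (1 - p))) *
        ∑ e : Eg,
          (fkProb ends ξ p q (A ∩ {ω | ω e = true}) -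
            fkProb ends ξ p q A * fkProb ends ξ p q {ω | ω e = true})) p := by
  have hZ : ∑ ω, fkWeight ends ξ p q ω ≠ 0 :=
    (sum_pos (fun ω _ => fkWeight_pos ends ξ hp hq ω) univ_nonempty).ne'
  have hderiv := hasDerivAt_centerMass_fkWeight ends ξ hp.1.ne' hp.2.ne hZ
    (A.indicator (1 : (Eg → Bool) → ℝ))
  simpa only [weightedCov_fkWeight_indicator, ← fkProb_eq_centerMass, smul_eq_mul, ← one_div]
    using hderiv

end FKMeasure

/-- Russo-type formula for FK-percolation: for every increasing event `A`, the map
`p ↦ φ^ξ_{G,p,q}[A]` is differentiable on `(0,1)` with derivative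
`(1/(p(1−p))) · Σ_{e∈E} (φ^ξ_{G,p,q}[A ∩ {ω(e)=1}] − φ^ξ_{G,p,q}[A]·φ^ξ_{G,p,q}[ω(e)=1])`. -/
theorem fk_russo_formula [Fintype V] [DecidableEq V] [Fintype Eg] [DecidableEq Eg]
    (ends : Eg → Sym2 V) (B : Finset V) (ξ : Finpartition B)
    (q : ℝ) (hq : 1 ≤ q)
    (A : Set (Eg → Bool)) (hA : Increasing A)
    (p : ℝ) (hp : p ∈ Set.Ioo (0 : ℝ) 1) :
    HasDerivAt (fun r : ℝ => fkProb ends ξ r q A)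
      ((1 / (p * (1 - p))) *
        ∑ e : Eg,
          (fkProb ends ξ p q (A ∩ {ω | ω e = true}) -
            fkProb ends ξ p q A * fkProb ends ξ p q {ω | ω e = true})) p := by
  exact fk_russo_formula_general ends ξ hp (zero_lt_one.trans_le hq) A

end FK
end
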